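/- arXiv:1506.07699 — 2 statements merged into one kernel-verified Lean document; each statement's English description precedes it below -/
import Mathlib

section
/- Let f ∈ ℝ[x₁,…,xₙ] be a quadratic polynomial such that C = {p ∈ ℝⁿ : f(p) ≥ 0} is a compact convex set with nonempty interior. Suppose C = {p ∈ ℝⁿ : A₀ + A₁p₁ + ⋯ + Aₙpₙ ⪰ 0} with A₀,…,Aₙ real symmetric r×r matrices. If n > 2^k for some non-negative integer k, then r > 2^k. In particular r ≥ n/2, and if n = 2^k + 1 then r ≥ n. -/
/-!
Up to an affine change of coordinates the set is the unit ball `∑ uᵢ ^ 2 ≤ 1`, and the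
representation becomes a symmetric linear pencil `M` of size `r` such that `A₀ + M u` is positive
semidefinite exactly when `‖u‖ ≤ 1`. Here `A₀` can be replaced by the identity: `A₀` is congruent to
a projection `E`, and every `M u` vanishes on the kernel of `E` because it is positive and negative
semidefinite there for small `u`. Extremality on the unit sphere now says that `‖u‖` is an
eigenvalue of `-M u`, so the polynomial `det ((M x) ^ 2 - ∑ xᵢ ^ 2)` vanishes identically. A
polynomial vector `v ≠ 0` in the kernel of `(M x) ^ 2 - ∑ xᵢ ^ 2` satisfies
`(∑ xᵢ ^ 2) * ∑ vⱼ ^ 2 = ∑ ((M x) v)ⱼ ^ 2`. If `r ≤ 2 ^ k`, Pfister's theorem that the nonzero sums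
of `2 ^ k` squares in a field form a group shows that `∑ xᵢ ^ 2` is a sum of `2 ^ k` squares of
rational functions, and by the Cassels–Pfister theorem this forces `n ≤ 2 ^ k`.
-/

open MvPolynomial

section SumsOfSquares

variable {R S : Type*} [CommRing R] [CommRing S]

/-- `a` is a sum of `m` squares. Zero summands are allowed, so the property is monotone in `m`. -/
def IsSumSqOfLength (m : ℕ) (a : R) : Prop :=
  ∃ v : Fin m → R, ∑ i, v i ^ 2 = a

theorem isSumSqOfLength_sum_sq {ι : Type*} [Fintype ι] {m : ℕ} (hm : Fintype.card ι ≤ m)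
    (v : ι → R) : IsSumSqOfLength m (∑ i, v i ^ 2) := by
  obtain ⟨e⟩ : Nonempty (ι ↪ Fin m) :=
    Function.Embedding.nonempty_of_card_le (by rwa [Fintype.card_fin])
  refine ⟨Function.extend e v 0, (Fintype.sum_of_injective e e.injective _ _ ?_ ?_).symm⟩
  · intro j hj
    rw [Function.extend_apply' _ _ _ hj, Pi.zero_apply, zero_pow two_ne_zero]
  · intro i
    rw [e.injective.extend_apply]

theorem exists_isSumSqOfLength_of_isSumSq {a : R} (h : IsSumSq a) :
    ∃ m, IsSumSqOfLength m a := by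
  induction h with
  | zero => exact ⟨0, ![], by simp⟩
  | sq_add b _ ih =>
    obtain ⟨m, v, rfl⟩ := ih
    exact ⟨m + 1, Fin.cons b v, by simp [Fin.sum_univ_succ, sq]⟩

namespace IsSumSqOfLength

variable {m : ℕ} {a : R}

theorem map (h : IsSumSqOfLength m a) (φ : R →+* S) : IsSumSqOfLength m (φ a) := by
  obtain ⟨v, rfl⟩ := h
  exact ⟨fun i => φ (v i), by simp only [map_sum, map_pow]⟩

theorem sq_mul (h : IsSumSqOfLength m a) (b : R) : IsSumSqOfLength m (b ^ 2 * a) := by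
  obtain ⟨v, rfl⟩ := h
  exact ⟨fun i => b * v i, by simp only [mul_pow, Finset.mul_sum]⟩

theorem clear_denominators [IsDomain R] {K : Type*} [Field K] [Algebra R K] [IsFractionRing R K]
    (h : IsSumSqOfLength m (algebraMap R K a)) : ∃ b ≠ 0, IsSumSqOfLength m (b ^ 2 * a) := by
  obtain ⟨v, hv⟩ := h
  obtain ⟨b, hb⟩ := IsLocalization.exist_integer_multiples_of_finite (nonZeroDivisors R) v
  choose w hw using hb
  refine ⟨b, nonZeroDivisors.ne_zero b.2, w, IsFractionRing.injective R K ?_⟩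
  simp only [map_sum, map_pow, map_mul, hw, Algebra.smul_def, mul_pow, ← hv, Finset.mul_sum]

end IsSumSqOfLength

end SumsOfSquares

section FormallyReal

variable {R : Type*} [CommRing R]

theorem eq_zero_of_sum_sq_eq_zero [IsFormallyReal R] {ι : Type*} [Fintype ι] {v : ι → R}
    (h : ∑ i, v i ^ 2 = 0) : v = 0 := by
  classical
  funext i
  rw [← Finset.add_sum_erase _ _ (Finset.mem_univ i)] at h
  exact pow_eq_zero_iff two_ne_zero |>.1 <| IsFormallyReal.eq_zero_of_add_right
    (sq (v i) ▸ .mul_self _) (IsSumSq.sum_sq _ _) h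

theorem isFormallyReal_of_forall_sum_sq
    (h : ∀ (m : ℕ) (v : Fin m → R), ∑ i, v i ^ 2 = 0 → v = 0) : IsFormallyReal R := by
  refine .of_eq_zero_of_eq_zero_of_mul_self_add fun {s a} hs has => ?_
  obtain ⟨m, v, rfl⟩ := exists_isSumSqOfLength_of_isSumSq hs
  exact congrFun (h (m + 1) (Fin.cons a v) (by simpa [Fin.sum_univ_succ, sq] using has)) 0

theorem isFormallyReal_of_exists_ringHom {S : Type*} [CommRing S] [IsFormallyReal S]
    (h : ∀ a : R, a ≠ 0 → ∃ φ : R →+* S, φ a ≠ 0) : IsFormallyReal R := by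
  refine isFormallyReal_of_forall_sum_sq fun m v hv => ?_
  by_contra hne
  obtain ⟨i, hi⟩ := Function.ne_iff.1 hne
  obtain ⟨φ, hφ⟩ := h (v i) hi
  refine hφ (congrFun (eq_zero_of_sum_sq_eq_zero (v := fun i => φ (v i)) ?_) i)
  simpa only [map_sum, map_pow, map_zero] using congrArg φ hv

instance [IsFormallyReal R] [Nontrivial R] : IsSemireal R where
  one_add_ne_zero hs h :=
    one_ne_zero (IsFormallyReal.eq_zero_of_add_right IsSumSq.one hs h)

instance {σ K : Type*} [Field K] [IsFormallyReal K] : IsFormallyReal (MvPolynomial σ K) :=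
  isFormallyReal_of_exists_ringHom (S := K) fun p hp => by
    contrapose! hp
    exact MvPolynomial.funext fun x => by simpa using hp (eval x)

instance {K : Type*} [Field K] [IsFormallyReal K] : IsFormallyReal (Polynomial K) :=
  isFormallyReal_of_exists_ringHom (S := K) fun p hp => by
    contrapose! hp
    exact Polynomial.funext fun x => by simpa using hp (Polynomial.evalRingHom x)

instance [IsDomain R] [IsFormallyReal R] : IsFormallyReal (FractionRing R) := by
  refine isFormallyReal_of_forall_sum_sq fun m v hv => ?_
  obtain ⟨b, hb⟩ := IsLocalization.exist_integer_multiples_of_finite (nonZeroDivisors R) v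
  choose w hw using hb
  have hw_zero : w = 0 := by
    refine eq_zero_of_sum_sq_eq_zero (IsFractionRing.injective R (FractionRing R) ?_)
    simp only [map_sum, map_pow, map_zero, hw, Algebra.smul_def, mul_pow, ← Finset.mul_sum, hv,
      mul_zero]
  funext i
  simpa [hw_zero, nonZeroDivisors.ne_zero b.2] using (hw i).symm

end FormallyReal

section Cassels

open Polynomial

/- The line through `g` and the point `(f * g + r) / f` of the quadric `∑ yᵢ ^ 2 = p` meets that
quadric a second time at `w / f'`. -/
theorem exists_second_intersection {R ι : Type*} [CommRing R] [Fintype ι] {f p : R} {g r : ι → R}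
    (h : ∑ i, (f * g i + r i) ^ 2 = f ^ 2 * p) :
    ∃ (f' : R) (w : ι → R), f' * f = ∑ i, r i ^ 2 ∧ ∑ i, w i ^ 2 = f' ^ 2 * p := by
  have sum_sq_add (a b : R) : ∑ i, (a * g i + b * r i) ^ 2 =
      a ^ 2 * ∑ i, g i ^ 2 + 2 * a * b * ∑ i, g i * r i + b ^ 2 * ∑ i, r i ^ 2 := by
    simp only [Finset.mul_sum, ← Finset.sum_add_distrib]
    exact Finset.sum_congr rfl fun i _ => by ring
  have hf := sum_sq_add f 1
  simp only [one_mul, h] at hf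
  let A := ∑ i, g i ^ 2 - p
  let f' := -(f * A + 2 * ∑ i, g i * r i)
  have hf' : f' * f = ∑ i, r i ^ 2 := by
    simp only [f', A]
    linear_combination hf
  refine ⟨f', fun i => f' * g i + A * r i, hf', ?_⟩
  rw [sum_sq_add, ← hf']
  simp only [f', A]
  ring

variable {F : Type*} [Field F]

theorem degree_sum_sq_mod_lt {ι : Type*} [Fintype ι] {f : F[X]} (hf : f ≠ 0) (h : ι → F[X]) :
    (∑ i, (h i % f) ^ 2).degree < f.degree + f.degree := by
  refine (degree_sum_le _ _).trans_lt ((Finset.sup_lt_iff ?_).2 fun i _ => ?_)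
  · simp [bot_lt_iff_ne_bot, hf]
  · rw [sq, degree_mul]
    have hlt : (h i % f).degree < f.degree := degree_mod_lt _ hf
    calc (h i % f).degree + (h i % f).degree ≤ (h i % f).degree + f.degree := by gcongr
      _ < f.degree + f.degree := WithBot.add_lt_add_right (degree_ne_bot.2 hf) hlt

variable [IsFormallyReal F] {m : ℕ}

theorem IsSumSqOfLength.of_sq_mul {f p : F[X]} (hf : f ≠ 0) (h : IsSumSqOfLength m (f ^ 2 * p)) :
    IsSumSqOfLength m p := by
  induction f using degree_lt_wf.induction with
  | _ f ih =>
  obtain ⟨h, hh⟩ := h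
  let g i := h i / f
  let r i := h i % f
  have hdiv i : h i = f * g i + r i := (EuclideanDomain.div_add_mod (h i) f).symm
  simp only [hdiv] at hh
  obtain ⟨f', w, hf', hw⟩ := exists_second_intersection hh
  by_cases hr : ∑ i, r i ^ 2 = 0
  · have hr0 : r = 0 := eq_zero_of_sum_sq_eq_zero hr
    simp only [hr0, Pi.zero_apply, add_zero, mul_pow, ← Finset.mul_sum] at hh
    exact ⟨g, mul_left_cancel₀ (pow_ne_zero 2 hf) hh⟩
  · refine ih f' ?_ (left_ne_zero_of_mul (hf' ▸ hr)) ⟨w, hw⟩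
    refine lt_of_add_lt_add_right (a := f.degree) ?_
    rw [← degree_mul, hf']
    exact degree_sum_sq_mod_lt hf h

theorem two_mul_natDegree_le_natDegree_sum_sq {ι : Type*} [Fintype ι] (g : ι → F[X]) (i : ι) :
    2 * (g i).natDegree ≤ (∑ j, g j ^ 2).natDegree := by
  have : Nonempty ι := ⟨i⟩
  obtain ⟨j, hj⟩ := Finite.exists_max fun j => (g j).natDegree
  have hle : 2 * (g i).natDegree ≤ 2 * (g j).natDegree := Nat.mul_le_mul_left 2 (hj i)
  rcases eq_or_ne (g j) 0 with hg | hg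
  · exact hle.trans (by simp [hg])
  · refine hle.trans (le_natDegree_of_ne_zero fun h => leadingCoeff_ne_zero.2 hg ?_)
    simp only [finsetSum_coeff, coeff_pow_of_natDegree_le (hj _)] at h
    exact congrFun (eq_zero_of_sum_sq_eq_zero h) j

theorem exists_isSumSqOfLength_of_X_sq_add_C {d : F}
    (h : IsSumSqOfLength m (Polynomial.X ^ 2 + Polynomial.C d)) :
    ∃ m', m = m' + 1 ∧ IsSumSqOfLength m' d := by
  obtain ⟨g, hg⟩ := h
  have hdeg i : (g i).natDegree ≤ 1 := by
    have := two_mul_natDegree_le_natDegree_sum_sq g i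
    rw [hg, natDegree_X_pow_add_C] at this
    lia
  have hg_eval i (c : F) : (g i).eval c = (g i).coeff 1 * c + (g i).coeff 0 := by
    conv_lhs => rw [eq_X_add_C_of_natDegree_le_one (hdeg i)]
    simp
  have hsum (c : F) : ∑ i, (g i).eval c ^ 2 = c ^ 2 + d := by
    simpa [eval_finsetSum] using congrArg (eval c) hg
  rcases m with _ | m
  · simp [(monic_X_pow_add_C d two_ne_zero).ne_zero.symm] at hg
  -- The linear polynomial `g 0` takes the value `c` or `-c` at some `c`; its square then cancels
  -- against `X ^ 2`.
  obtain ⟨c, hc⟩ : ∃ c, (g 0).eval c ^ 2 = c ^ 2 := by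
    by_cases ha : (g 0).coeff 1 = 1
    · refine ⟨-(g 0).coeff 0 / 2, ?_⟩
      rw [hg_eval, ha]
      ring
    · refine ⟨(g 0).coeff 0 / (1 - (g 0).coeff 1), ?_⟩
      have : 1 - (g 0).coeff 1 ≠ 0 := sub_ne_zero.2 (Ne.symm ha)
      rw [hg_eval]
      field_simp
      ring
  refine ⟨m, rfl, fun i => (g i.succ).eval c, ?_⟩
  have := hsum c
  rw [Fin.sum_univ_succ, hc] at this
  exact add_left_cancel this

end Cassels

section SumOfVariables

variable {K : Type*} [Field K] [IsFormallyReal K]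

theorem le_of_isSumSqOfLength_sum_X_sq {n m : ℕ}
    (h : IsSumSqOfLength m (algebraMap (MvPolynomial (Fin n) K)
      (FractionRing (MvPolynomial (Fin n) K)) (∑ i, X i ^ 2))) : n ≤ m := by
  induction n generalizing m with
  | zero => exact m.zero_le
  | succ n ih =>
    obtain ⟨f, hf, hsum⟩ := h.clear_denominators
    let L := FractionRing (MvPolynomial (Fin n) K)
    let φ : MvPolynomial (Fin (n + 1)) K →+* Polynomial L :=
      (Polynomial.mapRingHom (algebraMap _ L)).comp (finSuccEquiv K n).toRingEquiv.toRingHom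
    have hφ : Function.Injective φ :=
      (Polynomial.map_injective _ (IsFractionRing.injective _ L)).comp (finSuccEquiv K n).injective
    have hφX : φ (∑ i, X i ^ 2) =
        Polynomial.X ^ 2 + Polynomial.C (algebraMap (MvPolynomial (Fin n) K) L (∑ i, X i ^ 2)) := by
      simp [φ, Fin.sum_univ_succ, finSuccEquiv_X_zero, finSuccEquiv_X_succ,
        Polynomial.map_sum]
    have hφsum := hsum.map φ
    rw [map_mul, map_pow, hφX] at hφsum
    obtain ⟨m', rfl, hm'⟩ := exists_isSumSqOfLength_of_X_sq_add_C <|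
      hφsum.of_sq_mul ((map_ne_zero_iff φ hφ).2 hf)
    exact Nat.succ_le_succ (ih hm')

end SumOfVariables

section Pfister

open scoped Matrix

variable {K : Type*} [Field K] {ι κ : Type*} [Fintype ι] [DecidableEq ι] [Fintype κ] [DecidableEq κ]

theorem mul_transpose_eq_smul_one {c : K} (hc : c ≠ 0) {T : Matrix ι ι K}
    (h : Tᵀ * T = c • (1 : Matrix ι ι K)) : T * Tᵀ = c • (1 : Matrix ι ι K) := by
  have hinv : (c⁻¹ • Tᵀ) * T = 1 := by rw [Matrix.smul_mul, h, inv_smul_smul₀ hc]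
  rw [mul_eq_one_comm, Matrix.mul_smul, inv_smul_eq_iff₀ hc] at hinv
  exact hinv

variable (ι) in
/-- `c` is a similarity factor of the form `∑ i : ι, vᵢ ^ 2`: some linear map multiplies the values
of this form by `c`. Degenerate similarities, with `c = 0`, are allowed. -/
def IsSimilarityFactor (c : K) : Prop :=
  ∃ T : Matrix ι ι K, Tᵀ * T = c • (1 : Matrix ι ι K)

theorem isSimilarityFactor_sq (a : K) : IsSimilarityFactor ι (a ^ 2) :=
  ⟨a • 1, by simp [smul_smul, sq]⟩

namespace IsSimilarityFactor

variable {a b c : K}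

theorem reindex (e : ι ≃ κ) (h : IsSimilarityFactor ι c) : IsSimilarityFactor κ c := by
  obtain ⟨T, hT⟩ := h
  refine ⟨T.submatrix e.symm e.symm, ?_⟩
  rw [Matrix.transpose_submatrix, Matrix.submatrix_mul_equiv, hT, Matrix.submatrix_smul,
    Pi.smul_apply, Pi.smul_apply, Matrix.submatrix_one_equiv]

theorem sum_self (h : IsSimilarityFactor ι c) : IsSimilarityFactor (ι ⊕ ι) c := by
  obtain ⟨T, hT⟩ := h
  refine ⟨.fromBlocks T 0 0 T, ?_⟩
  simp [Matrix.fromBlocks_transpose, Matrix.fromBlocks_multiply, hT, ← Matrix.fromBlocks_one,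
    Matrix.fromBlocks_smul]

theorem add (ha : IsSimilarityFactor ι a) (hb : IsSimilarityFactor ι b) :
    IsSimilarityFactor (ι ⊕ ι) (a + b) := by
  rcases eq_or_ne a 0 with rfl | ha0
  · simpa using hb.sum_self
  rcases eq_or_ne b 0 with rfl | hb0
  · simpa using ha.sum_self
  obtain ⟨S, hS⟩ := ha
  obtain ⟨T, hT⟩ := hb
  have hSt : S * Sᵀ = a • 1 := mul_transpose_eq_smul_one ha0 hS
  have hTt : T * Tᵀ = b • 1 := mul_transpose_eq_smul_one hb0 hT
  -- Orthogonality of the two block columns of `[S, -Tᵀ; T, Y]` forces this choice of `Y`.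
  let Y := b⁻¹ • (T * Sᵀ * Tᵀ)
  have hTY : Tᵀ * Y = Sᵀ * Tᵀ := by
    rw [Matrix.mul_smul, ← Matrix.mul_assoc, ← Matrix.mul_assoc, hT]
    simp [hb0]
  have hYT : Yᵀ * T = T * S := by
    simpa using congrArg Matrix.transpose hTY
  have hYY : Yᵀ * Y = a • 1 := by
    calc Yᵀ * Y = b⁻¹ • (Yᵀ * T * (Sᵀ * Tᵀ)) := by simp only [Y, Matrix.mul_smul, Matrix.mul_assoc]
      _ = b⁻¹ • (T * (S * Sᵀ) * Tᵀ) := by rw [hYT]; simp only [Matrix.mul_assoc]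
      _ = a • 1 := by simp [hSt, hTt, smul_smul, mul_comm a, hb0]
  refine ⟨.fromBlocks S (-Tᵀ) T Y, ?_⟩
  rw [Matrix.fromBlocks_transpose, Matrix.fromBlocks_multiply, ← Matrix.fromBlocks_one,
    Matrix.fromBlocks_smul]
  congr 1
  · rw [hS, hT, add_smul]
  · rw [hTY, Matrix.mul_neg, neg_add_cancel, smul_zero]
  · rw [hYT, Matrix.transpose_neg, Matrix.transpose_transpose, Matrix.neg_mul, neg_add_cancel,
      smul_zero]
  · rw [hYY, Matrix.transpose_neg, Matrix.transpose_transpose, neg_mul_neg, hTt, add_comm, add_smul]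

end IsSimilarityFactor

theorem isSimilarityFactor_sum_sq {k : ℕ} (v : Fin (2 ^ k) → K) :
    IsSimilarityFactor (Fin (2 ^ k)) (∑ i, v i ^ 2) := by
  induction k with
  | zero => simpa using isSimilarityFactor_sq (v 0)
  | succ k ih =>
    let e : Fin (2 ^ k) ⊕ Fin (2 ^ k) ≃ Fin (2 ^ (k + 1)) :=
      finSumFinEquiv.trans (finCongr (by ring))
    rw [← e.sum_comp, Fintype.sum_sum_type]
    exact ((ih _).add (ih _)).reindex e

theorem IsSumSqOfLength.mul {k : ℕ} {a b : K} (ha : IsSumSqOfLength (2 ^ k) a)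
    (hb : IsSumSqOfLength (2 ^ k) b) : IsSumSqOfLength (2 ^ k) (a * b) := by
  obtain ⟨v, rfl⟩ := ha
  obtain ⟨w, rfl⟩ := hb
  obtain ⟨T, hT⟩ := isSimilarityFactor_sum_sq v
  refine ⟨T *ᵥ w, ?_⟩
  calc ∑ i, (T *ᵥ w) i ^ 2 = (T *ᵥ w) ⬝ᵥ (T *ᵥ w) := by simp only [dotProduct, sq]
    _ = w ⬝ᵥ ((Tᵀ * T) *ᵥ w) := by
      rw [← Matrix.mulVec_mulVec, Matrix.dotProduct_transpose_mulVec]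
    _ = (∑ i, v i ^ 2) * ∑ i, w i ^ 2 := by
      rw [hT, Matrix.smul_mulVec, Matrix.one_mulVec, dotProduct_smul, smul_eq_mul]
      simp only [dotProduct, sq]

theorem IsSumSqOfLength.of_mul_eq {k : ℕ} {a b s : K} (ha : IsSumSqOfLength (2 ^ k) a)
    (hb : IsSumSqOfLength (2 ^ k) b) (hb0 : b ≠ 0) (h : s * b = a) : IsSumSqOfLength (2 ^ k) s := by
  have hs : s = b⁻¹ ^ 2 * (a * b) := by
    rw [← h]
    field_simp
  exact hs ▸ (ha.mul hb).sq_mul b⁻¹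

end Pfister

section Pencil

open scoped Matrix MatrixOrder ComplexOrder

variable {ι 𝕜 : Type*} [RCLike 𝕜] {A E N : Matrix ι ι 𝕜}

section Fintype

variable [Fintype ι]

theorem mul_eq_right_of_posSemidef_add_sub (hE : IsStarProjection E) (hadd : (E + N).PosSemidef)
    (hsub : (E - N).PosSemidef) : E * N = N := by
  classical
  have hN : N.IsHermitian := by
    simpa using hadd.1.sub hE.isSelfAdjoint
  have hNF : N * (1 - E) = 0 := by
    refine Matrix.ext_of_mulVec_single fun i => ?_
    let w := (1 - E) *ᵥ Pi.single i 1
    have hEw : E *ᵥ w = 0 := by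
      rw [Matrix.mulVec_mulVec, hE.mul_one_sub_self, Matrix.zero_mulVec]
    have hpos := hadd.dotProduct_mulVec_nonneg w
    have hneg := hsub.dotProduct_mulVec_nonneg w
    rw [Matrix.add_mulVec, hEw, zero_add] at hpos
    rw [Matrix.sub_mulVec, hEw, zero_sub, dotProduct_neg, neg_nonneg] at hneg
    have hzero := (hadd.dotProduct_mulVec_zero_iff w).1
    rw [Matrix.add_mulVec, hEw, zero_add] at hzero
    rw [← Matrix.mulVec_mulVec, hzero (le_antisymm hneg hpos), Matrix.zero_mulVec]
  have hNE : N * E = N := by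
    rwa [mul_sub, mul_one, sub_eq_zero, eq_comm] at hNF
  have hEs : Eᴴ = E := hE.isSelfAdjoint
  simpa [Matrix.conjTranspose_mul, hN.eq, hEs] using congrArg Matrix.conjTranspose hNE

variable [DecidableEq ι]

theorem exists_isUnit_isStarProjection_conj (hA : A.PosSemidef) :
    ∃ G : Matrix ι ι 𝕜, IsUnit G ∧ IsStarProjection (star G * A * G) := by
  let g : ℝ → ℝ := fun x => if x = 0 then 1 else (√x)⁻¹
  have hcont (φ : ℝ → ℝ) : ContinuousOn φ (spectrum ℝ A) := A.finite_real_spectrum.continuousOn _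
  have hnonneg (x : ℝ) (hx : x ∈ spectrum ℝ A) : 0 ≤ x := spectrum_nonneg_of_nonneg hA.nonneg hx
  have hsa : IsSelfAdjoint A := hA.1
  refine ⟨cfc g A, (isUnit_cfc_iff g A (hcont _)).2 fun x hx => ?_, ?_⟩
  · by_cases h0 : x = 0
    · simp [g, h0]
    · simp [g, h0, Real.sqrt_ne_zero (hnonneg x hx)]
  have hconj : star (cfc g A) * A * cfc g A = cfc (fun x => g x * x * g x) A := by
    rw [cfc_mul _ _ A (hcont _) (hcont _), cfc_mul _ _ A (hcont _) (hcont _), cfc_id' ℝ A,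
      (cfc_predicate g A).star_eq]
  rw [hconj]
  refine ⟨?_, cfc_predicate _ A⟩
  rw [IsIdempotentElem, ← cfc_mul _ _ A (hcont _) (hcont _)]
  refine cfc_congr fun x hx => ?_
  by_cases h0 : x = 0
  · simp [h0]
  · have hone : g x * x * g x = 1 := by
      have hsqrt : √x ≠ 0 := (Real.sqrt_ne_zero (hnonneg x hx)).2 h0
      simp only [g, h0, if_false]
      field_simp
      exact (Real.sq_sqrt (hnonneg x hx)).symm
    simp [hone]

theorem exists_star_mul_mul_eq_one (hA : A.PosDef) : ∃ G : Matrix ι ι 𝕜, star G * A * G = 1 := by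
  obtain ⟨G, hG, hE⟩ := exists_isUnit_isStarProjection_conj hA.posSemidef
  exact ⟨G, (IsIdempotentElem.iff_eq_one_of_isUnit ((hG.star.mul hA.isUnit).mul hG)).1
    hE.isIdempotentElem⟩

theorem posSemidef_one_add_iff (hE : IsStarProjection E) (hN : N.IsHermitian) (hEN : E * N = N) :
    (1 + N).PosSemidef ↔ (E + N).PosSemidef := by
  have hEs : Eᴴ = E := hE.isSelfAdjoint
  have hNE : N * E = N := by
    simpa [Matrix.conjTranspose_mul, hN.eq, hEs] using congrArg Matrix.conjTranspose hEN
  constructor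
  · intro h
    have := h.conjTranspose_mul_mul_same E
    rwa [hEs, mul_add, mul_one, add_mul, hE.isIdempotentElem, hEN, hNE] at this
  · intro h
    have := h.add (Matrix.nonneg_iff_posSemidef.1 hE.one_sub.nonneg)
    rwa [add_right_comm, add_sub_cancel] at this

theorem det_one_add_eq_zero (hN : (1 + N).PosSemidef)
    (hmax : ∀ t : ℝ, 1 < t → ¬ (1 + t • N).PosSemidef) : (1 + N).det = 0 := by
  by_contra hdet
  have hpos : (1 + N).PosDef := hN.posDef_iff_det_ne_zero.2 hdet
  rcases subsingleton_or_nontrivial (Matrix ι ι 𝕜) with _ | _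
  · exact hmax 2 one_lt_two (Subsingleton.elim 0 (1 + (2 : ℝ) • N) ▸ .zero)
  obtain ⟨δ, hδ, hle⟩ := (CFC.exists_pos_algebraMap_le_iff (A := Matrix ι ι 𝕜) hN.1.isSelfAdjoint).2
    fun x hx => (Matrix.isStrictlyPositive_iff_posDef.2 hpos).spectrum_pos hx
  refine hmax (1 + δ) (by linarith) (Matrix.nonneg_iff_posSemidef.1 ?_)
  have hsplit : 1 + (1 + δ) • N =
      (1 + δ) • (1 + N - algebraMap ℝ _ δ) + (δ ^ 2) • (1 : Matrix ι ι 𝕜) := by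
    rw [Algebra.algebraMap_eq_smul_one]
    module
  rw [hsplit]
  exact add_nonneg (smul_nonneg (by positivity) (sub_nonneg.2 hle))
    (smul_nonneg (by positivity) zero_le_one)

end Fintype

variable [DecidableEq ι] {V : Type*} [NormedAddCommGroup V] [NormedSpace ℝ V] {A₀ : Matrix ι ι 𝕜}
  {M : V →ₗ[ℝ] Matrix ι ι 𝕜}

theorem exists_posSemidef_one_add_iff_norm_le_one [Finite ι]
    (h : ∀ v, (A₀ + M v).PosSemidef ↔ ‖v‖ ≤ 1) :
    ∃ M' : V →ₗ[ℝ] Matrix ι ι 𝕜, (∀ v, (M' v).IsHermitian) ∧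
      ∀ v, (1 + M' v).PosSemidef ↔ ‖v‖ ≤ 1 := by
  cases nonempty_fintype ι
  have hA₀ : A₀.PosSemidef := by simpa using (h 0).2
  obtain ⟨G, hG, hE⟩ := exists_isUnit_isStarProjection_conj hA₀
  set E := star G * A₀ * G
  let M' : V →ₗ[ℝ] Matrix ι ι 𝕜 := LinearMap.mulLeftRight ℝ (star G, G) ∘ₗ M
  have hEM v : (E + M' v).PosSemidef ↔ ‖v‖ ≤ 1 := by
    rw [← h v, ← Matrix.IsUnit.posSemidef_star_left_conjugate_iff (x := A₀ + M v) hG, mul_add,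
      add_mul]
    rfl
  have hball v (hv : ‖v‖ ≤ 1) : (M' v).IsHermitian ∧ E * M' v = M' v := by
    have hadd := (hEM v).2 hv
    have hsub : (E - M' v).PosSemidef := by
      simpa [sub_eq_add_neg] using (hEM (-v)).2 (by rwa [norm_neg])
    exact ⟨by simpa using hadd.1.sub hE.isSelfAdjoint,
      mul_eq_right_of_posSemidef_add_sub hE hadd hsub⟩
  have hM' v : (M' v).IsHermitian ∧ E * M' v = M' v := by
    have hv : M' v = ‖v‖ • M' (‖v‖⁻¹ • v) := by
      rcases eq_or_ne v 0 with rfl | hv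
      · simp
      · rw [← map_smul, smul_inv_smul₀ (norm_ne_zero_iff.2 hv)]
    obtain ⟨hherm, hmul⟩ := hball (‖v‖⁻¹ • v) (by simpa using inv_norm_smul_mem_unitClosedBall v)
    rw [hv, Matrix.mul_smul, hmul]
    exact ⟨hherm.smul (.all _), rfl⟩
  exact ⟨M', fun v => (hM' v).1, fun v =>
    (posSemidef_one_add_iff hE (hM' v).1 (hM' v).2).trans (hEM v)⟩

theorem det_mul_self_sub_norm_sq_eq_zero [Fintype ι] (h : ∀ v, (1 + M v).PosSemidef ↔ ‖v‖ ≤ 1)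
    {v : V} (hv : v ≠ 0) : (M v * M v - (‖v‖ ^ 2) • (1 : Matrix ι ι 𝕜)).det = 0 := by
  have hnorm : ‖v‖ ≠ 0 := norm_ne_zero_iff.2 hv
  let w := ‖v‖⁻¹ • v
  have hw : ‖w‖ = 1 := norm_smul_inv_norm hv
  have hvw : M v = ‖v‖ • M w := by rw [← map_smul, smul_inv_smul₀ hnorm]
  have hdet : (1 + M w).det = 0 := by
    refine det_one_add_eq_zero ((h w).2 hw.le) fun t ht hpos => ?_
    rw [← map_smul, h, norm_smul, hw, mul_one, Real.norm_eq_abs] at hpos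
    exact (ht.trans_le (le_abs_self t)).not_ge hpos
  have hfactor : M v * M v - (‖v‖ ^ 2) • (1 : Matrix ι ι 𝕜) =
      (1 + M w) * ((‖v‖ ^ 2) • (M w - 1)) := by
    rw [hvw]
    simp only [Matrix.smul_mul, Matrix.mul_smul, add_mul, mul_sub, one_mul, mul_one]
    module
  rw [hfactor, Matrix.det_mul, hdet, zero_mul]

end Pencil

section PolynomialPencil

open scoped Matrix

variable {K ι : Type*} [Field K] [IsFormallyReal K] [Fintype ι] {n k : ℕ}

theorem le_of_sum_X_sq_mul_sum_sq {v w : ι → MvPolynomial (Fin n) K} (hv : v ≠ 0)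
    (h : (∑ i, X i ^ 2) * ∑ j, v j ^ 2 = ∑ j, w j ^ 2) (hι : Fintype.card ι ≤ 2 ^ k) :
    n ≤ 2 ^ k := by
  let φ := algebraMap (MvPolynomial (Fin n) K) (FractionRing (MvPolynomial (Fin n) K))
  have hφ : φ (∑ j, v j ^ 2) ≠ 0 :=
    (map_ne_zero_iff φ (IsFractionRing.injective _ _)).2 (mt eq_zero_of_sum_sq_eq_zero hv)
  exact le_of_isSumSqOfLength_sum_X_sq <|
    ((isSumSqOfLength_sum_sq hι w).map φ).of_mul_eq ((isSumSqOfLength_sum_sq hι v).map φ) hφ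
      (by rw [← map_mul, h])

theorem eq_zero_of_eval_eq_zero {K σ : Type*} [CommRing K] [IsDomain K] [Infinite K]
    {p q : MvPolynomial σ K} (hq : q ≠ 0) (h : ∀ u, eval u q ≠ 0 → eval u p = 0) : p = 0 := by
  refine (mul_eq_zero.1 (MvPolynomial.funext fun u => ?_)).resolve_left hq
  rw [map_mul, map_zero, mul_eq_zero, or_iff_not_imp_left]
  exact h u

variable [DecidableEq ι]

theorem exists_sum_sq_mul_eq_sum_sq {R : Type*} [CommRing R] [IsDomain R] {P : Matrix ι ι R}
    (hP : P.IsSymm) {s : R} (h : (P * P - s • (1 : Matrix ι ι R)).det = 0) :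
    ∃ v w : ι → R, v ≠ 0 ∧ s * ∑ j, v j ^ 2 = ∑ j, w j ^ 2 := by
  obtain ⟨v, hv, hPv⟩ := Matrix.exists_mulVec_eq_zero_iff.2 h
  rw [Matrix.sub_mulVec, Matrix.smul_mulVec, Matrix.one_mulVec, sub_eq_zero] at hPv
  refine ⟨v, P *ᵥ v, hv, ?_⟩
  calc s * ∑ j, v j ^ 2 = v ⬝ᵥ (s • v) := by
        rw [dotProduct_smul, smul_eq_mul]
        simp only [dotProduct, sq]
    _ = v ⬝ᵥ (Pᵀ *ᵥ P *ᵥ v) := by rw [← hPv, hP.eq, Matrix.mulVec_mulVec]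
    _ = ∑ j, (P *ᵥ v) j ^ 2 := by
      rw [Matrix.dotProduct_transpose_mulVec]
      simp only [dotProduct, sq]

theorem le_two_pow_of_det_mul_self_sub_eq_zero {M : (Fin n → K) →ₗ[K] Matrix ι ι K}
    (hM : ∀ u, (M u).IsSymm) (hdet : ∀ u ≠ 0, (M u * M u - (∑ i, u i ^ 2) • 1).det = 0)
    (hι : Fintype.card ι ≤ 2 ^ k) : n ≤ 2 ^ k := by
  rcases n with _ | n
  · exact Nat.zero_le _
  let P : Matrix ι ι (MvPolynomial (Fin (n + 1)) K) :=
    ∑ i, (X i : MvPolynomial (Fin (n + 1)) K) • (M (Pi.single i 1)).map C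
  have hP : P.IsSymm := by
    simp only [P, Matrix.IsSymm, Matrix.transpose_sum, Matrix.transpose_smul,
      ← Matrix.transpose_map, (hM _).eq]
  have hPeval u : P.map (eval u) = M u := by
    conv_rhs => rw [pi_eq_sum_univ' u, map_sum]
    ext i j
    simp [P, Matrix.sum_apply]
  have hdet0 : (P * P - (∑ i, X i ^ 2 : MvPolynomial (Fin (n + 1)) K) • 1).det = 0 := by
    refine eq_zero_of_eval_eq_zero (X_ne_zero 0) fun u hu => ?_
    have hu0 : u ≠ 0 := by
      rintro rfl
      simp at hu
    rw [RingHom.map_det, map_sub, map_mul, RingHom.mapMatrix_apply, hPeval,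
      Matrix.smul_one_eq_diagonal, RingHom.mapMatrix_apply, Matrix.diagonal_map (map_zero _)]
    simpa [Matrix.smul_one_eq_diagonal] using hdet u hu0
  obtain ⟨v, w, hv, hvw⟩ := exists_sum_sq_mul_eq_sum_sq hP hdet0
  exact le_of_sum_X_sq_mul_sum_sq hv hvw hι

end PolynomialPencil

section Quadric

open scoped Matrix

variable {σ R : Type*} [Fintype σ]

/-- The polynomial function of degree at most two on `σ → R` with constant term `c`, linear part `b`
and quadratic part given by the Gram matrix `S`. -/
def quadraticFun [CommSemiring R] (c : R) (b : σ → R) (S : Matrix σ σ R) (p : σ → R) : R :=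
  c + b ⬝ᵥ p + p ⬝ᵥ S *ᵥ p

theorem exists_eval_monomial_eq_quadraticFun [CommSemiring R] {d : σ →₀ ℕ} (hd : d.degree ≤ 2)
    (a : R) : ∃ c b S, ∀ p : σ → R, eval p (monomial d a) = quadraticFun c b S p := by
  classical
  have heval (p : σ → R) :
      eval p (monomial d a) = a * ((Finsupp.toMultiset d).map p).prod := by
    rw [eval_monomial, Finsupp.toMultiset_map, Finsupp.prod_toMultiset,
      Finsupp.prod_mapDomain_index (by simp) (by simp [pow_add])]
  have hcard : (Finsupp.toMultiset d).card = d.degree := Finsupp.card_toMultiset d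
  simp only [heval, quadraticFun]
  interval_cases d.degree
  · rw [Multiset.card_eq_zero] at hcard
    exact ⟨a, 0, 0, by simp [hcard]⟩
  · obtain ⟨i, hi⟩ := Multiset.card_eq_one.1 hcard
    exact ⟨0, Pi.single i a, 0, by simp [hi]⟩
  · obtain ⟨i, j, hij⟩ := Multiset.card_eq_two.1 hcard
    refine ⟨0, 0, Matrix.single i j a, fun p => ?_⟩
    simp only [hij, Multiset.insert_eq_cons, Multiset.map_cons, Multiset.map_singleton,
      Multiset.prod_cons, Multiset.prod_singleton, dotProduct, Pi.zero_apply, zero_mul,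
      Finset.sum_const_zero, add_zero, Matrix.single_mulVec, Function.update_apply, mul_ite,
      mul_zero, Finset.sum_ite_eq', Finset.mem_univ, ↓reduceIte, zero_add]
    ring

theorem exists_eval_eq_quadraticFun [CommSemiring R] {f : MvPolynomial σ R}
    (hf : f.totalDegree ≤ 2) : ∃ c b S, ∀ p, eval p f = quadraticFun c b S p := by
  choose! c b S h using fun d (hd : d ∈ f.support) =>
    exists_eval_monomial_eq_quadraticFun ((le_totalDegree hd).trans hf) (f.coeff d)
  refine ⟨∑ d ∈ f.support, c d, ∑ d ∈ f.support, b d, ∑ d ∈ f.support, S d, fun p => ?_⟩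
  conv_lhs => rw [f.as_sum, map_sum, Finset.sum_congr rfl fun d hd => h d hd p]
  simp only [quadraticFun, Finset.sum_add_distrib, sum_dotProduct, Matrix.sum_mulVec,
    dotProduct_sum]

theorem exists_isSymm_eval_eq_quadraticFun [Field R] [NeZero (2 : R)] {f : MvPolynomial σ R}
    (hf : f.totalDegree ≤ 2) :
    ∃ c b S, S.IsSymm ∧ ∀ p, eval p f = quadraticFun c b S p := by
  obtain ⟨c, b, S, h⟩ := exists_eval_eq_quadraticFun hf
  refine ⟨c, b, (2 : R)⁻¹ • (S + Sᵀ), by simp [Matrix.IsSymm, add_comm], fun p => ?_⟩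
  have htranspose : p ⬝ᵥ Sᵀ *ᵥ p = p ⬝ᵥ S *ᵥ p := by
    rw [Matrix.dotProduct_transpose_mulVec]
  rw [h, quadraticFun, quadraticFun, Matrix.smul_mulVec, Matrix.add_mulVec, dotProduct_smul,
    dotProduct_add, htranspose, smul_eq_mul, ← two_mul, inv_mul_cancel_left₀ two_ne_zero]

theorem quadraticFun_add [CommRing R] {S : Matrix σ σ R} (hS : S.IsSymm) (c : R) (b e x : σ → R) :
    quadraticFun c b S (e + x) =
      quadraticFun (quadraticFun c b S e) (b + (2 : R) • S *ᵥ e) S x := by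
  have hsymm : e ⬝ᵥ S *ᵥ x = S *ᵥ e ⬝ᵥ x := by
    rw [Matrix.dotProduct_mulVec, ← Matrix.mulVec_transpose, hS.eq]
  simp only [quadraticFun, Matrix.mulVec_add, dotProduct_add, add_dotProduct, smul_dotProduct,
    smul_eq_mul, hsymm, dotProduct_comm x (S *ᵥ e)]
  ring

theorem exists_quadraticFun_add_eq [Field R] [NeZero (2 : R)] [DecidableEq σ] {S : Matrix σ σ R}
    (hS : S.IsSymm) (hunit : IsUnit S) (c : R) (b : σ → R) :
    ∃ p₀ c₀, ∀ x, quadraticFun c b S (p₀ + x) = c₀ + x ⬝ᵥ S *ᵥ x := by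
  obtain ⟨p₀, hp₀⟩ := Matrix.mulVec_surjective_iff_isUnit.2 hunit (-(2 : R)⁻¹ • b)
  refine ⟨p₀, quadraticFun c b S p₀, fun x => ?_⟩
  rw [quadraticFun_add hS, hp₀, smul_smul, mul_neg, mul_inv_cancel₀ two_ne_zero, neg_one_smul,
    add_neg_cancel, quadraticFun, zero_dotProduct, add_zero]

theorem not_isBounded_of_ray_subset {E : Type*} [NormedAddCommGroup E] [NormedSpace ℝ E] {s : Set E}
    {e x : E} (hx : x ≠ 0) (hray : ∀ t : ℝ, 0 ≤ t → e + t • x ∈ s) : ¬ Bornology.IsBounded s := by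
  intro hs
  obtain ⟨r, hr⟩ := hs.exists_norm_le
  have hxn : 0 < ‖x‖ := norm_pos_iff.2 hx
  let t := (|r| + ‖e‖ + 1) / ‖x‖
  have ht : 0 ≤ t := by positivity
  have htx : ‖t • x‖ = |r| + ‖e‖ + 1 := by
    rw [norm_smul, Real.norm_of_nonneg ht, div_mul_cancel₀ _ hxn.ne']
  have hle : ‖t • x‖ ≤ ‖t • x + e‖ + ‖e‖ := norm_le_add_norm_add _ _
  have hray_le : ‖e + t • x‖ ≤ r := hr _ (hray t ht)
  rw [add_comm] at hray_le
  linarith [le_abs_self r]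

variable {c : ℝ} {b : σ → ℝ} {S : Matrix σ σ ℝ}

theorem posDef_neg_of_isBounded (hS : S.IsSymm)
    (hbdd : Bornology.IsBounded {p | 0 ≤ quadraticFun c b S p})
    (hne : {p | 0 ≤ quadraticFun c b S p}.Nonempty) : (-S).PosDef := by
  obtain ⟨e, he⟩ := hne
  have hneg (x : σ → ℝ) (hx : x ≠ 0) (hb : 0 ≤ (b + (2 : ℝ) • S *ᵥ e) ⬝ᵥ x) :
      0 < x ⬝ᵥ (-S) *ᵥ x := by
    by_contra! hSx
    rw [Matrix.neg_mulVec, dotProduct_neg, neg_nonpos] at hSx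
    refine not_isBounded_of_ray_subset (e := e) hx (fun t ht => ?_) hbdd
    rw [Set.mem_ofPred_eq, quadraticFun_add hS, quadraticFun, Matrix.mulVec_smul, dotProduct_smul,
      dotProduct_smul, smul_dotProduct]
    have he : 0 ≤ quadraticFun c b S e := he
    positivity
  refine .of_dotProduct_mulVec_pos (by simp [Matrix.IsHermitian, hS.eq]) fun x hx => ?_
  rw [star_trivial]
  rcases le_total 0 ((b + (2 : ℝ) • S *ᵥ e) ⬝ᵥ x) with h | h
  · exact hneg x hx h
  · simpa [Matrix.mulVec_neg] using hneg (-x) (neg_ne_zero.2 hx)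
      (by simpa only [dotProduct_neg, neg_nonneg] using h)

theorem exists_affine_iff_norm_le_one (hS : S.IsSymm)
    (hbdd : Bornology.IsBounded {p | 0 ≤ quadraticFun c b S p})
    (hnt : {p | 0 ≤ quadraticFun c b S p}.Nontrivial) :
    ∃ (p₀ : σ → ℝ) (T : EuclideanSpace ℝ σ →ₗ[ℝ] (σ → ℝ)),
      ∀ u, 0 ≤ quadraticFun c b S (p₀ + T u) ↔ ‖u‖ ≤ 1 := by
  classical
  have hpos : (-S).PosDef := posDef_neg_of_isBounded hS hbdd hnt.nonempty
  obtain ⟨p₀, c₀, hp₀⟩ := exists_quadraticFun_add_eq hS (by simpa using hpos.isUnit) c b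
  obtain ⟨G, hG⟩ := exists_star_mul_mul_eq_one hpos
  have hc₀ : 0 < c₀ := by
    obtain ⟨p, hp, hne⟩ := hnt.exists_ne p₀
    have hlt := hpos.dotProduct_mulVec_pos (sub_ne_zero.2 hne)
    have hle : 0 ≤ c₀ + (p - p₀) ⬝ᵥ S *ᵥ (p - p₀) := by
      rw [← hp₀, add_sub_cancel]
      exact hp
    rw [star_trivial, Matrix.neg_mulVec, dotProduct_neg] at hlt
    linarith
  have hnorm (u : EuclideanSpace ℝ σ) : (G *ᵥ u) ⬝ᵥ S *ᵥ (G *ᵥ u) = -‖u‖ ^ 2 := by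
    have hstar : u ⬝ᵥ (star G * -S * G) *ᵥ u = ‖u‖ ^ 2 := by
      rw [hG, Matrix.one_mulVec, EuclideanSpace.real_norm_sq_eq]
      simp only [dotProduct, sq]
    rw [← hstar, ← Matrix.mulVec_mulVec, ← Matrix.mulVec_mulVec, Matrix.star_eq_conjTranspose,
      Matrix.conjTranspose_eq_transpose_of_trivial, Matrix.dotProduct_transpose_mulVec,
      Matrix.neg_mulVec, neg_dotProduct, neg_neg, dotProduct_comm]
  refine ⟨p₀, √c₀ • G.toLin' ∘ₗ (WithLp.linearEquiv 2 ℝ (σ → ℝ)).toLinearMap, fun u => ?_⟩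
  have hvalue : quadraticFun c b S (p₀ + √c₀ • G *ᵥ u) = c₀ * (1 - ‖u‖ ^ 2) := by
    rw [hp₀, Matrix.mulVec_smul, dotProduct_smul, smul_dotProduct, hnorm, smul_smul,
      Real.mul_self_sqrt hc₀.le, smul_eq_mul]
    ring
  calc _ ↔ 0 ≤ c₀ * (1 - ‖u‖ ^ 2) := by rw [← hvalue]; rfl
    _ ↔ ‖u‖ ≤ 1 := by
      rw [mul_nonneg_iff_of_pos_left hc₀, sub_nonneg, sq_le_one_iff₀ (norm_nonneg u)]

end Quadric

section Spectrahedron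

variable {σ ι : Type*} [Fintype σ] [Fintype ι] [DecidableEq ι]

theorem exists_isSymm_det_mul_self_sub_eq_zero {f : MvPolynomial σ ℝ} (hf : f.totalDegree ≤ 2)
    (hbdd : Bornology.IsBounded {p | 0 ≤ eval p f}) (hnt : {p | 0 ≤ eval p f}.Nontrivial)
    {A₀ : Matrix ι ι ℝ} {L : (σ → ℝ) →ₗ[ℝ] Matrix ι ι ℝ}
    (h : ∀ p, 0 ≤ eval p f ↔ (A₀ + L p).PosSemidef) :
    ∃ M : (σ → ℝ) →ₗ[ℝ] Matrix ι ι ℝ, (∀ u, (M u).IsSymm) ∧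
      ∀ u ≠ 0, (M u * M u - (∑ i, u i ^ 2) • 1).det = 0 := by
  obtain ⟨c, b, S, hS, hq⟩ := exists_isSymm_eval_eq_quadraticFun hf
  simp only [hq] at hbdd hnt h
  obtain ⟨p₀, T, hT⟩ := exists_affine_iff_norm_le_one hS hbdd hnt
  have hball u : (A₀ + L p₀ + (L ∘ₗ T) u).PosSemidef ↔ ‖u‖ ≤ 1 := by
    rw [← hT, h, map_add, add_assoc, LinearMap.comp_apply]
  obtain ⟨M, hM, hMball⟩ := exists_posSemidef_one_add_iff_norm_le_one hball
  refine ⟨M ∘ₗ (WithLp.linearEquiv 2 ℝ (σ → ℝ)).symm.toLinearMap, fun u => ?_, fun u hu => ?_⟩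
  · exact Matrix.isHermitian_iff_isSymm.1 (hM _)
  · have := det_mul_self_sub_norm_sq_eq_zero hMball (v := WithLp.toLp 2 u) (by simpa using hu)
    rwa [EuclideanSpace.real_norm_sq_eq] at this

end Spectrahedron

/-- lower bounds on the size of spectrahedral representations of
compact convex sets defined by a quadratic polynomial. -/
theorem stmt_6 (n r : ℕ) (f : MvPolynomial (Fin n) ℝ) (hf : f.totalDegree = 2)
    (C : Set (Fin n → ℝ)) (hC : C = {p | 0 ≤ eval p f})
    (hcomp : IsCompact C) (hconv : Convex ℝ C) (hint : (interior C).Nonempty)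
    (A : Fin (n + 1) → Matrix (Fin r) (Fin r) ℝ) (hA : ∀ k, (A k).IsSymm)
    (hrep : ∀ p : Fin n → ℝ,
      p ∈ C ↔ (A 0 + ∑ i : Fin n, p i • A i.succ).PosSemidef) :
    (∀ k : ℕ, 2 ^ k < n → 2 ^ k < r) ∧ n ≤ 2 * r ∧
      (∀ k : ℕ, n = 2 ^ k + 1 → n ≤ r) := by
  subst hC
  rcases n with _ | n
  · simp
  obtain ⟨x, hx⟩ := hint
  have hnt := (infinite_of_mem_nhds x (mem_interior_iff_mem_nhds.1 hx)).nontrivial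
  obtain ⟨M, hM, hdet⟩ := exists_isSymm_det_mul_self_sub_eq_zero hf.le hcomp.isBounded hnt
    (L := Fintype.linearCombination ℝ fun i => A i.succ) hrep
  have hlt (k : ℕ) (hk : 2 ^ k < n + 1) : 2 ^ k < r := by
    contrapose! hk
    exact le_two_pow_of_det_mul_self_sub_eq_zero hM hdet (by rwa [Fintype.card_fin])
  have hr : r ≠ 0 := by
    rintro rfl
    exact one_ne_zero (Matrix.det_isEmpty.symm.trans (hdet 1 one_ne_zero))
  refine ⟨hlt, ?_, fun k hk => hk ▸ hlt k (by lia)⟩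
  by_contra! hn
  have := hlt (Nat.log 2 r + 1) ?_
  · exact (Nat.lt_pow_succ_log_self one_lt_two r).not_gt this
  · have := Nat.pow_log_le_self 2 hr
    lia
end

section
/- Let A, B, C be real symmetric r×r matrices such that f(x,y,z) = det(I_r + Ax + By + Cz) is a polynomial of degree exactly 3. Then the projective surface in ℙ³(ℂ) defined by the homogenization of f is singular, i.e., there is a point of the complex projective surface where all four partial derivatives of the homogenization of f vanish. -/
open MvPolynomial

/-! Every `N v = v₀ A + v₁ B + v₂ C` has rank the degree of `f` on the line through `v`, so the
ranks are at most `3`, with equality for some `v₀`. In an orthonormal basis diagonalizing `N v₀`,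
the bordered minors give `N v = [a, b; bᵀ, 0]` with `bᵀ adj(a) b = 0`; evaluating at `v₀ + t v` and
letting `t → 0` after division by `t²`, also `bᵀ adj(D₀) b = 0`, where `D₀` is the invertible block
of `N v₀`. A totally isotropic subspace of a nondegenerate space of dimension `3` has dimension at
most `1`, so `b = x cᵀ` for a fixed vector `x`.

If `b = 0`, then `F` is the determinant of a `4`-dimensional linear system of symmetric `3 × 3`
matrices. Over `ℂ` such a system contains a matrix of rank at most one, because it is cut out by
two linear equations, which restrict to two conics on the Veronese surface; there the determinant
vanishes to second order. If `b ≠ 0`, then `xᵀ adj(a) x = 0`, so the compressions of `a` to the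
orthogonal complement of `x` have rank at most one and are multiples of a fixed `y yᵀ`. Hence
`N v = x ξᵀ + ξ xᵀ + q y yᵀ` with `x ⟂ y`, and expanding the determinant gives `F = α Q + γ s²` with
`α, γ, s` linear and `Q` quadratic. This is singular wherever `α = s = Q = 0`. -/

open Matrix

section QuadraticForm

variable {K V : Type*} [Field K] [IsAlgClosed K] [NeZero (2 : K)] [AddCommGroup V] [Module K V]

lemma exists_smul_add_smul_isotropic (Q : QuadraticForm K V) (x y : V) :
    ∃ a b : K, (a ≠ 0 ∨ b ≠ 0) ∧ Q (a • x + b • y) = 0 := by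
  by_cases hx : Q x = 0
  · exact ⟨1, 0, by simp [hx]⟩
  · obtain ⟨d, hd⟩ :=
      IsAlgClosed.exists_eq_mul_self (discrim (Q x) (QuadraticMap.polar Q x y) (Q y))
    obtain ⟨a, ha⟩ := exists_quadratic_eq_zero hx ⟨d, hd⟩
    refine ⟨a, 1, by simp, ?_⟩
    simp only [QuadraticMap.map_add, QuadraticMap.map_smul, QuadraticMap.polar_smul_left, one_smul,
      smul_eq_mul]
    linear_combination ha

lemma exists_ne_zero_isotropic (hV : 1 < Module.finrank K V) (Q : QuadraticForm K V) :
    ∃ x ≠ 0, Q x = 0 := by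
  have : Nontrivial V := Module.nontrivial_of_finrank_pos (R := K) (by lia)
  obtain ⟨u, hu⟩ := exists_ne (0 : V)
  obtain ⟨v, huv⟩ := exists_linearIndependent_pair_of_one_lt_finrank hV hu
  obtain ⟨a, b, hab, hQ⟩ := exists_smul_add_smul_isotropic Q u v
  refine ⟨_, fun h0 => ?_, hQ⟩
  have := LinearIndependent.pair_iff.mp huv a b h0
  tauto

lemma exists_common_isotropic_of_radical (hV : 2 < Module.finrank K V) (S T : QuadraticForm K V)
    {n : V} (hn : n ≠ 0) (hrad : S.polarBilin n = 0) : ∃ x ≠ 0, S x = 0 ∧ T x = 0 := by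
  have hSn : S n = 0 := by simpa [two_ne_zero] using LinearMap.congr_fun hrad n
  have hpolar (w : V) : QuadraticMap.polar S n w = 0 := LinearMap.congr_fun hrad w
  obtain ⟨f, hf⟩ : ∃ f : Module.Dual K V, f n ≠ 0 := by
    by_contra! h
    exact hn ((Module.forall_dual_apply_eq_zero_iff K n).mp h)
  have : FiniteDimensional K V := Module.finite_of_finrank_pos (by lia)
  have hker : 1 < Module.finrank K f.ker := by
    have := Module.Dual.finrank_ker_add_one_of_ne_zero (f := f) (by rintro rfl; simp at hf)
    lia
  obtain ⟨w, hw, hSw⟩ := exists_ne_zero_isotropic hker (S.comp f.ker.subtype)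
  obtain ⟨a, b, hab, hT⟩ := exists_smul_add_smul_isotropic T n w
  refine ⟨_, fun h0 => ?_, ?_, hT⟩
  · have ha : a = 0 := by simpa [hf] using congrArg f h0
    simp_all
  · have hSw : S w = 0 := hSw
    simp [QuadraticMap.map_add, QuadraticMap.map_smul, QuadraticMap.polar_smul_left,
      QuadraticMap.polar_smul_right, hSn, hSw, hpolar]

lemma exists_common_isotropic [FiniteDimensional K V] (hV : 2 < Module.finrank K V)
    (S T : QuadraticForm K V) : ∃ x ≠ 0, S x = 0 ∧ T x = 0 := by
  by_cases hT : Function.Injective T.polarBilin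
  · let e : V ≃ₗ[K] Module.Dual K V :=
      LinearEquiv.ofInjectiveOfFinrankEq _ hT Subspace.dual_finrank_eq.symm
    have : Nontrivial V := Module.nontrivial_of_finrank_pos (R := K) (by lia)
    obtain ⟨μ, hμ⟩ := Module.End.exists_eigenvalue (e.symm.toLinearMap ∘ₗ S.polarBilin)
    obtain ⟨n, hn⟩ := hμ.exists_hasEigenvector
    have hSn : S.polarBilin n = μ • T.polarBilin n := by
      have h : e.symm (S.polarBilin n) = μ • n := hn.apply_eq_smul
      rw [LinearEquiv.symm_apply_eq, map_smul] at h
      exact h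
    have hrad : (S - μ • T).polarBilin n = 0 := by
      ext w
      have := LinearMap.congr_fun hSn w
      simp only [QuadraticMap.polarBilin_apply_apply, LinearMap.smul_apply, QuadraticMap.polar,
        smul_eq_mul, _root_.sub_apply, _root_.smul_apply, LinearMap.zero_apply] at this ⊢
      linear_combination this
    obtain ⟨x, hx, hSx, hTx⟩ := exists_common_isotropic_of_radical hV (S - μ • T) T hn.2 hrad
    exact ⟨x, hx, by simpa [hTx] using hSx, hTx⟩
  · obtain ⟨n, hrad, hn⟩ := Submodule.exists_mem_ne_zero_of_ne_bot
      (mt LinearMap.ker_eq_bot.mp hT)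
    obtain ⟨x, hx, hTx, hSx⟩ := exists_common_isotropic_of_radical hV T S hn hrad
    exact ⟨x, hx, hSx, hTx⟩

lemma exists_ne_zero_quadraticMap_eq_zero {W : Type*} [AddCommGroup W] [Module K W]
    [FiniteDimensional K V] (hV : 2 < Module.finrank K V) (hW : Module.finrank K W = 2)
    (Q : QuadraticMap K V W) : ∃ x ≠ 0, Q x = 0 := by
  have : FiniteDimensional K W := Module.finite_of_finrank_pos (by lia)
  let b := Module.finBasisOfFinrankEq K W hW
  obtain ⟨x, hx, h0, h1⟩ := exists_common_isotropic hV ((b.coord 0).compQuadraticMap Q)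
    ((b.coord 1).compQuadraticMap Q)
  refine ⟨x, hx, b.ext_elem fun i => ?_⟩
  fin_cases i
  · simpa using h0
  · simpa using h1

/-- The entries of a matrix at a representative of each unordered pair of indices; they determine
a symmetric matrix. -/
noncomputable def upperEntries (R ι : Type*) [Semiring R] :
    Matrix ι ι R →ₗ[R] Sym2 ι → R :=
  LinearMap.pi fun s => entryLinearMap R R s.out.1 s.out.2

lemma eq_of_upperEntries_eq {R ι : Type*} [Semiring R] {A B : Matrix ι ι R} (hA : A.IsSymm)
    (hB : B.IsSymm) (h : upperEntries R ι A = upperEntries R ι B) : A = B := by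
  ext i j
  have hout := congrFun h s(i, j)
  simp only [upperEntries, LinearMap.pi_apply, entryLinearMap_apply] at hout
  have hs : s((s(i, j)).out.1, (s(i, j)).out.2) = s(i, j) := Quot.out_eq s(i, j)
  obtain ⟨h₁, h₂⟩ | ⟨h₁, h₂⟩ := Sym2.eq_iff.mp hs
  · rwa [h₁, h₂] at hout
  · rwa [h₁, h₂, hA.apply, hB.apply] at hout

lemma isSymm_vecMulVec_self {R ι : Type*} [CommSemigroup R] (x : ι → R) :
    (vecMulVec x x).IsSymm := by
  ext i j
  simp [vecMulVec_apply, mul_comm]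

/-- Four dimensions of symmetric `3 × 3` matrices leave two linear equations on `Sym₃`, which
restrict to two conics on the Veronese surface. -/
lemma exists_ne_zero_apply_eq_vecMulVec_self {E : Type*} [AddCommGroup E] [Module K E]
    (hE : Module.finrank K E = 4) (T : E →ₗ[K] Matrix (Fin 3) (Fin 3) K)
    (hT : ∀ p, (T p).IsSymm) : ∃ p ≠ 0, ∃ x, T p = vecMulVec x x := by
  by_cases hinj : Function.Injective T
  · let R := LinearMap.range (upperEntries K (Fin 3) ∘ₗ T)
    have hR : Module.finrank K R = 4 := by
      rw [LinearMap.finrank_range_of_inj, hE]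
      exact fun p q h => hinj (eq_of_upperEntries_eq (hT p) (hT q) h)
    have hW : Module.finrank K ((Sym2 (Fin 3) → K) ⧸ R) = 2 := by
      have h := R.finrank_quotient_add_finrank
      rw [hR, Module.finrank_fintype_fun_eq_card, Sym2.card, Fintype.card_fin] at h
      exact Nat.add_right_cancel h
    obtain ⟨x, hx, hQ⟩ := exists_ne_zero_quadraticMap_eq_zero (by simp) hW
      ((R.mkQ ∘ₗ upperEntries K (Fin 3)).compQuadraticMap
        (LinearMap.BilinMap.toQuadraticMap (vecMulVecBilin K K)))
    obtain ⟨p, hp⟩ := (Submodule.Quotient.mk_eq_zero R).mp hQ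
    have hTp : T p = vecMulVec x x :=
      eq_of_upperEntries_eq (hT p) (isSymm_vecMulVec_self x) hp
    refine ⟨p, ?_, x, hTp⟩
    rintro rfl
    apply hx
    simpa using vecMulVec_eq_zero.mp (hTp.symm.trans (map_zero T))
  · obtain ⟨p, hp, hp0⟩ := Submodule.exists_mem_ne_zero_of_ne_bot
      (mt LinearMap.ker_eq_bot.mp hinj)
    exact ⟨p, hp0, 0, by simpa using hp⟩

end QuadraticForm

section Polynomial

variable {R σ : Type*} [CommRing R]

lemma eval_smul_of_isHomogeneous {F : MvPolynomial σ R} {n : ℕ} (hF : F.IsHomogeneous n) (c : R)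
    (x : σ → R) : eval (c • x) F = c ^ n * eval x F := by
  simp only [eval_eq, Finset.mul_sum]
  refine Finset.sum_congr rfl fun d hd => ?_
  have hdeg : ∑ i ∈ d.support, d i = n := hF.degree_eq_sum_deg_support hd |>.symm
  simp only [Pi.smul_apply, smul_eq_mul, mul_pow, Finset.prod_mul_distrib,
    Finset.prod_pow_eq_pow_sum, hdeg]
  ring

lemma eq_of_eval_eq_homogenization {K : Type*} [Field K] [Infinite K] {k n : ℕ}
    {F G : MvPolynomial (Fin (k + 1)) K} (hF : F.IsHomogeneous n)
    (h : ∀ w ≠ 0, ∀ v, eval (vecCons w v) G = w ^ n * eval (vecCons 1 (w⁻¹ • v)) F) : F = G := by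
  have hX : X 0 * F = X 0 * G := by
    refine MvPolynomial.funext fun p => ?_
    obtain hp | hp := eq_or_ne (p 0) 0
    · simp [hp]
    · have hcons : vecCons (p 0) (vecTail p) = p := cons_head_tail p
      have hG := h _ hp (vecTail p)
      rw [← eval_smul_of_isHomogeneous hF, smul_cons, smul_inv_smul₀ hp, smul_eq_mul, mul_one,
        hcons] at hG
      simp [hG]
  exact mul_left_cancel₀ (X_ne_zero 0) hX

/-- The linear form with the same coefficients as `l`, over an `R`-algebra `A`. Its value at the
generic point `X` is the polynomial of `l`. -/
noncomputable def extendForm (A : Type*) [CommRing A] [Algebra R A] [Fintype σ] [DecidableEq σ]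
    (l : Module.Dual R (σ → R)) : Module.Dual A (σ → A) :=
  Fintype.linearCombination A fun i => algebraMap R A (l (Pi.single i 1))

section extendForm

variable [Fintype σ] [DecidableEq σ] (l : Module.Dual R (σ → R))

lemma aeval_extendForm {A : Type*} [CommRing A] [Algebra R A] (p : σ → A) :
    aeval p (extendForm (MvPolynomial σ R) l X) = extendForm A l p := by
  simp [extendForm, Fintype.linearCombination_apply, MvPolynomial.algebraMap_eq]

lemma eval_extendForm (p : σ → R) : eval p (extendForm (MvPolynomial σ R) l X) = l p := by
  have hself : extendForm R l = l := by
    ext i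
    simp [extendForm, Fintype.linearCombination_apply, Pi.single_apply]
  rw [← coe_aeval_eq_eval, RingHom.coe_coe, aeval_extendForm, hself]

end extendForm

/-- `p` lies on the hypersurface `F = 0` and all the partial derivatives of `F` vanish there. -/
def IsSingularPoint {A : Type*} [CommRing A] [Algebra R A] (F : MvPolynomial σ R) (p : σ → A) :
    Prop :=
  aeval p F = 0 ∧ ∀ i, aeval p (pderiv i F) = 0

section IsSingularPoint

variable {A : Type*} [CommRing A] [Algebra R A] {p : σ → A}

lemma isSingularPoint_mul_add_mul_sq {a b c s : MvPolynomial σ R} (ha : aeval p a = 0)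
    (hb : aeval p b = 0) (hs : aeval p s = 0) : IsSingularPoint (a * b + c * s ^ 2) p :=
  ⟨by simp [ha, hs], fun i => by simp [ha, hb, hs, Derivation.leibniz, Derivation.leibniz_pow]⟩

lemma isSingularPoint_det {P : Matrix (Fin 3) (Fin 3) (MvPolynomial σ R)} {x y : Fin 3 → A}
    (hP : P.map (aeval p) = vecMulVec x y) : IsSingularPoint P.det p := by
  have hentry (i j : Fin 3) : aeval p (P i j) = x i * y j := congrFun₂ hP i j
  constructor
  · simp only [det_fin_three, map_add, map_sub, map_mul, hentry]
    ring
  · intro k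
    simp only [det_fin_three, map_add, map_sub, Derivation.leibniz, smul_eq_mul, map_mul, hentry]
    ring

end IsSingularPoint

end Polynomial

lemma det_one_add_vecMulVec_add_smul {R n : Type*} [CommRing R] [Fintype n] [DecidableEq n]
    {x y : n → R} (hxy : x ⬝ᵥ y = 0) (ξ : n → R) (q : R) :
    det (1 + (vecMulVec x ξ + vecMulVec ξ x + q • vecMulVec y y)) =
      (1 + q * y ⬝ᵥ y) * ((1 + x ⬝ᵥ ξ) ^ 2 - x ⬝ᵥ x * ξ ⬝ᵥ ξ) + q * x ⬝ᵥ x * (y ⬝ᵥ ξ) ^ 2 := by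
  have hfactor : vecMulVec x ξ + vecMulVec ξ x + q • vecMulVec y y =
      (of ![x, ξ, y])ᵀ * of ![ξ, x, q • y] := by
    ext i j
    simp only [Matrix.add_apply, Matrix.smul_apply, vecMulVec_apply, mul_apply, transpose_apply,
      of_apply, Fin.sum_univ_three, cons_val_zero, cons_val_one, cons_val, smul_eq_mul,
      cons_val', Pi.smul_apply, cons_val_fin_one]
    ring
  have hgram : of ![ξ, x, q • y] * (of ![x, ξ, y])ᵀ =
      !![x ⬝ᵥ ξ, ξ ⬝ᵥ ξ, y ⬝ᵥ ξ; x ⬝ᵥ x, x ⬝ᵥ ξ, 0; 0, q * y ⬝ᵥ ξ, q * y ⬝ᵥ y] := by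
    ext i j
    change ![ξ, x, q • y] i ⬝ᵥ ![x, ξ, y] j = _
    fin_cases i <;> fin_cases j <;>
      simp [hxy, dotProduct_comm ξ x, dotProduct_comm ξ y, dotProduct_comm y x]
  rw [hfactor, det_one_add_mul_comm, hgram, det_fin_three]
  simp only [Matrix.add_apply, one_apply_eq, one_apply_ne, ne_eq, Fin.reduceEq, zero_ne_one,
    one_ne_zero, not_false_eq_true, of_apply, cons_val', cons_val_zero, cons_val_one, cons_val,
    cons_val_fin_one]
  ring

section DeterminantalCubic

variable {F : MvPolynomial (Fin 4) ℝ} (hF : F.IsHomogeneous 3)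
include hF

theorem exists_isSingularPoint_of_eval_eq_det_fin_three
    (a : (Fin 3 → ℝ) →ₗ[ℝ] Matrix (Fin 3) (Fin 3) ℝ) (ha : ∀ v, (a v).IsSymm)
    (hFa : ∀ v, eval (vecCons 1 v) F = det (1 + a v)) :
    ∃ p : Fin 4 → ℂ, p ≠ 0 ∧ IsSingularPoint F p := by
  let T (i j : Fin 3) : Module.Dual ℝ (Fin 4 → ℝ) := entryLinearMap ℝ ℝ i j ∘ₗ
    ((LinearMap.proj 0).smulRight 1 + a ∘ₗ LinearMap.funLeft ℝ ℝ Fin.succ)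
  have hT (i j : Fin 3) : T i j = T j i := by
    ext k
    simp [T, one_apply, eq_comm, (ha _).apply i j]
  let P : Matrix (Fin 3) (Fin 3) (MvPolynomial (Fin 4) ℝ) :=
    of fun i j => extendForm (MvPolynomial (Fin 4) ℝ) (T i j) X
  have hFP : F = P.det := by
    refine eq_of_eval_eq_homogenization hF fun w hw v => ?_
    have hPw : P.map (eval (vecCons w v)) = w • (1 + a (w⁻¹ • v)) := by
      ext i j
      have htail : LinearMap.funLeft ℝ ℝ Fin.succ (vecCons w v) = v := rfl
      simp [P, T, eval_extendForm, htail, mul_add, hw]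
    rw [RingHom.map_det, RingHom.mapMatrix_apply, hPw, det_smul, Fintype.card_fin, hFa]
  let Tc : (Fin 4 → ℂ) →ₗ[ℂ] Matrix (Fin 3) (Fin 3) ℂ :=
    LinearMap.pi fun i => LinearMap.pi fun j => extendForm ℂ (T i j)
  have hTc (p : Fin 4 → ℂ) (i j : Fin 3) : Tc p i j = extendForm ℂ (T i j) p := rfl
  obtain ⟨p, hp, x, hx⟩ := exists_ne_zero_apply_eq_vecMulVec_self (by simp) Tc fun p => by
    ext i j
    simp [hTc, hT i j]
  refine ⟨p, hp, hFP ▸ isSingularPoint_det (x := x) (y := x) ?_⟩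
  rw [← hx]
  ext i j
  simp [P, hTc, aeval_extendForm]

theorem exists_isSingularPoint_of_eval_eq_det_rank_three {n : Type*} [Fintype n] [DecidableEq n]
    {x y : n → ℝ} (hxy : x ⬝ᵥ y = 0) (ξ : (Fin 3 → ℝ) →ₗ[ℝ] n → ℝ)
    (q : Module.Dual ℝ (Fin 3 → ℝ))
    (hFdet : ∀ v, eval (vecCons 1 v) F =
      det (1 + (vecMulVec x (ξ v) + vecMulVec (ξ v) x + q v • vecMulVec y y))) :
    ∃ p : Fin 4 → ℂ, p ≠ 0 ∧ IsSingularPoint F p := by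
  let tail := LinearMap.funLeft ℝ ℝ (Fin.succ : Fin 3 → Fin 4)
  let α : Module.Dual ℝ (Fin 4 → ℝ) := LinearMap.proj 0 + (y ⬝ᵥ y) • q ∘ₗ tail
  let β : Module.Dual ℝ (Fin 4 → ℝ) := LinearMap.proj 0 + dotProductBilin ℝ ℝ x ∘ₗ ξ ∘ₗ tail
  let η (k : n) : Module.Dual ℝ (Fin 4 → ℝ) := LinearMap.proj k ∘ₗ ξ ∘ₗ tail
  let s : Module.Dual ℝ (Fin 4 → ℝ) := dotProductBilin ℝ ℝ y ∘ₗ ξ ∘ₗ tail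
  let P (l : Module.Dual ℝ (Fin 4 → ℝ)) := extendForm (MvPolynomial (Fin 4) ℝ) l X
  have hFP : F = P α * (P β ^ 2 - C (x ⬝ᵥ x) * ∑ k, P (η k) ^ 2) +
      P ((x ⬝ᵥ x) • q ∘ₗ tail) * P s ^ 2 := by
    refine eq_of_eval_eq_homogenization hF fun w hw v => ?_
    have htail : tail (vecCons w v) = v := rfl
    have hη : ∑ k, ξ v k ^ 2 = ξ v ⬝ᵥ ξ v := by simp [dotProduct, sq]
    rw [hFdet, det_one_add_vecMulVec_add_smul hxy]
    simp only [P, α, β, η, s, map_add, map_sub, map_mul, map_pow, map_sum, map_smul, eval_C,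
      eval_extendForm, LinearMap.add_apply, LinearMap.smul_apply, LinearMap.coe_comp,
      LinearMap.coe_proj, Function.comp_apply, Function.eval, cons_val_zero, htail,
      dotProductBilin_apply_apply, dotProduct_smul, smul_dotProduct, smul_eq_mul, hη]
    field_simp
  let Q : QuadraticForm ℂ (Fin 4 → ℂ) := QuadraticMap.sq.comp (extendForm ℂ β) -
    ((x ⬝ᵥ x : ℝ) : ℂ) • ∑ k, QuadraticMap.sq.comp (extendForm ℂ (η k))
  let φ := (extendForm ℂ α).prod (extendForm ℂ s)
  have hker : 1 < Module.finrank ℂ φ.ker := by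
    have hrank := φ.finrank_range_add_finrank_ker
    have hrange := φ.range.finrank_le
    simp only [Module.finrank_prod, Module.finrank_self, Module.finrank_fin_fun] at hrank hrange
    lia
  obtain ⟨p, hp, hQ⟩ := exists_ne_zero_isotropic hker (Q.comp φ.ker.subtype)
  obtain ⟨hα, hs⟩ : extendForm ℂ α p = 0 ∧ extendForm ℂ s p = 0 := by
    simpa [φ] using p.2
  refine ⟨p, by simpa using hp, hFP ▸ isSingularPoint_mul_add_mul_sq ?_ ?_ ?_⟩
  · rwa [aeval_extendForm]
  · simpa [P, aeval_extendForm, Q, sq] using hQ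
  · rwa [aeval_extendForm]

end DeterminantalCubic

section Rank

lemma det_one_add_smul_eq_prod_eigenvalues {𝕜 n : Type*} [RCLike 𝕜] [Fintype n] [DecidableEq n]
    {N : Matrix n n 𝕜} (hN : N.IsHermitian) (t : 𝕜) :
    det (1 + t • N) = ∏ i, (1 + t * hN.eigenvalues i) := by
  have hdiag : 1 + t • diagonal (RCLike.ofReal ∘ hN.eigenvalues) =
      diagonal fun i => 1 + t * (hN.eigenvalues i : 𝕜) := by
    rw [← diagonal_smul, ← diagonal_one, diagonal_add]
    rfl
  conv_lhs => rw [hN.spectral_theorem, Unitary.conjStarAlgAut_apply, Matrix.mul_assoc,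
    ← Matrix.mul_smul, det_one_add_mul_comm, Matrix.smul_mul, Matrix.mul_assoc,
    Unitary.coe_star_mul_self, Matrix.mul_one, hdiag, det_diagonal]

lemma natDegree_eq_rank_of_eval_eq_det {𝕜 n : Type*} [RCLike 𝕜] [Fintype n] [DecidableEq n]
    {N : Matrix n n 𝕜} (hN : N.IsHermitian) {g : Polynomial 𝕜}
    (hg : ∀ t, g.eval t = det (1 + t • N)) : g.natDegree = N.rank := by
  have hprod : g = ∏ i, (Polynomial.C (hN.eigenvalues i : 𝕜) * Polynomial.X + 1) := by
    refine Polynomial.funext fun t => ?_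
    rw [hg, det_one_add_smul_eq_prod_eigenvalues hN, Polynomial.eval_prod]
    refine Finset.prod_congr rfl fun i _ => ?_
    simp only [Polynomial.eval_add, Polynomial.eval_mul, Polynomial.eval_C, Polynomial.eval_X,
      Polynomial.eval_one]
    ring
  have hne (i : n) : Polynomial.C (hN.eigenvalues i : 𝕜) * Polynomial.X + 1 ≠ 0 := fun h => by
    simpa using congrArg (Polynomial.eval 0) h
  rw [hprod, Polynomial.natDegree_prod _ _ fun i _ => hne i, hN.rank_eq_card_non_zero_eigs,
    Fintype.card_subtype, Finset.card_filter]
  refine Finset.sum_congr rfl fun i _ => ?_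
  rw [← Polynomial.C_1, Polynomial.natDegree_add_C]
  split_ifs with hi
  · exact Polynomial.natDegree_C_mul_X _ (by simpa using hi)
  · simp [not_not.mp hi]

section CommRing

variable {R σ : Type*} [CommRing R]

/-- The univariate polynomial `t ↦ f (t v)`, whose coefficients are the values at `v` of the
homogeneous components of `f`. -/
noncomputable def restrictToLine (v : σ → R) : MvPolynomial σ R →ₐ[R] Polynomial R :=
  aeval fun i => Polynomial.C (v i) * Polynomial.X

lemma eval_restrictToLine (f : MvPolynomial σ R) (v : σ → R) (t : R) :
    (restrictToLine v f).eval t = eval (t • v) f := by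
  induction f using MvPolynomial.induction_on with
  | C a => simp [restrictToLine]
  | add p q hp hq => simp [hp, hq]
  | mul_X p i hp =>
    rw [map_mul, Polynomial.eval_mul, hp]
    simp [restrictToLine, mul_comm t]

lemma coeff_restrictToLine (f : MvPolynomial σ R) (v : σ → R) (n : ℕ) :
    (restrictToLine v f).coeff n = eval v (homogeneousComponent n f) := by
  induction f using MvPolynomial.induction_on' with
  | monomial u a =>
    have hline : restrictToLine v (monomial u a) =
        Polynomial.C (eval v (monomial u a)) * Polynomial.X ^ u.degree := by
      simp [restrictToLine, aeval_monomial, eval_monomial, mul_pow, Finsupp.prod, mul_assoc,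
        Finset.prod_mul_distrib, Finset.prod_pow_eq_pow_sum, Finsupp.degree_apply]
    rw [hline, Polynomial.coeff_C_mul_X_pow,
      homogeneousComponent_of_mem (isHomogeneous_monomial a rfl), apply_ite (eval v), map_zero]
  | add p q hp hq => simp [hp, hq]

lemma natDegree_restrictToLine_le (f : MvPolynomial σ R) (v : σ → R) :
    (restrictToLine v f).natDegree ≤ f.totalDegree := by
  refine Polynomial.natDegree_le_iff_coeff_eq_zero.mpr fun n hn => ?_
  rw [coeff_restrictToLine, homogeneousComponent_eq_zero _ _ hn, map_zero]

lemma exists_natDegree_restrictToLine_eq [IsDomain R] [Infinite R] (f : MvPolynomial σ R) :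
    ∃ v, (restrictToLine v f).natDegree = f.totalDegree := by
  obtain rfl | hf := eq_or_ne f 0
  · exact ⟨0, by simp⟩
  have htop : homogeneousComponent f.totalDegree f ≠ 0 := by
    obtain ⟨d, hd, hdeg⟩ := Finset.exists_mem_eq_sup f.support (support_nonempty.mpr hf)
      fun s => s.sum fun _ e => e
    refine ne_zero_iff.mpr ⟨d, ?_⟩
    rw [coeff_homogeneousComponent, if_pos (show d.degree = f.totalDegree from hdeg.symm)]
    exact mem_support_iff.mp hd
  obtain ⟨v, hv⟩ : ∃ v, eval v (homogeneousComponent f.totalDegree f) ≠ 0 := by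
    by_contra! h
    exact htop (MvPolynomial.funext fun v => by simpa using h v)
  refine ⟨v, (natDegree_restrictToLine_le f v).antisymm (Polynomial.le_natDegree_of_ne_zero ?_)⟩
  rwa [coeff_restrictToLine]

end CommRing

variable {σ n : Type*} [Fintype n] [DecidableEq n] {f : MvPolynomial σ ℝ}
  {N : (σ → ℝ) →ₗ[ℝ] Matrix n n ℝ}

lemma natDegree_restrictToLine_eq_rank (hN : ∀ v, (N v).IsHermitian)
    (hf : ∀ v, eval v f = det (1 + N v)) (v : σ → ℝ) :
    (restrictToLine v f).natDegree = (N v).rank :=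
  natDegree_eq_rank_of_eval_eq_det (hN v) fun t => by rw [eval_restrictToLine, hf, map_smul]

end Rank

section BorderedDeterminant

variable {R 𝕜 V m ι κ : Type*} [NontriviallyNormedField 𝕜] [AddCommGroup V] [Module 𝕜 V]
  {M : V →ₗ[𝕜] Matrix (m ⊕ ι) (m ⊕ κ) 𝕜} {v₀ : V} {D₀ : Matrix m m 𝕜}

lemma apply_add_smul_eq_fromBlocks (hv₀ : M v₀ = fromBlocks D₀ 0 0 0) (v : V) (t : 𝕜) :
    M (v₀ + t • v) = fromBlocks (D₀ + t • (M v).toBlocks₁₁) (t • (M v).toBlocks₁₂)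
      (t • (M v).toBlocks₂₁) (t • (M v).toBlocks₂₂) := by
  conv_lhs => rw [map_add, map_smul, hv₀, ← fromBlocks_toBlocks (M v), fromBlocks_smul,
    fromBlocks_add, zero_add, zero_add, zero_add]

variable [Fintype m] [DecidableEq m]

lemma det_fromBlocks_unit_of_isRegular [CommRing R] {A : Matrix m m R} (hA : IsRegular A.det)
    (B : Matrix m Unit R) (C : Matrix Unit m R) (D : Matrix Unit Unit R) :
    (fromBlocks A B C D).det = (A.det • D - C * A.adjugate * B).det := by
  have hmul : fromBlocks A B C D * fromBlocks A.adjugate (-(A.adjugate * B)) 0 (A.det • 1) =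
      fromBlocks (A.det • 1) 0 (C * A.adjugate) (A.det • D - C * A.adjugate * B) := by
    simp [fromBlocks_multiply, mul_adjugate, ← Matrix.mul_assoc, sub_eq_neg_add]
  have hadj : A.adjugate.det * A.det = A.det ^ Fintype.card m := by
    rw [← det_mul, adjugate_mul, det_smul, det_one, mul_one]
  have hdet := congrArg det hmul
  rw [det_mul, det_fromBlocks_zero₂₁, det_fromBlocks_zero₁₂, det_smul, det_smul, det_one, det_one,
    mul_one, mul_one, Fintype.card_unit, pow_one, hadj, mul_comm] at hdet
  exact (hA.pow _).left hdet

lemma det_fromBlocks_unit [CommRing R] (A : Matrix m m R) (B : Matrix m Unit R)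
    (C : Matrix Unit m R) (D : Matrix Unit Unit R) :
    (fromBlocks A B C D).det = (A.det • D - C * A.adjugate * B).det := by
  let A' := (Polynomial.X : Polynomial R) • (1 : Matrix m m (Polynomial R)) + A.map Polynomial.C
  have hA' : IsRegular A'.det :=
    Polynomial.Monic.isRegular (Polynomial.leadingCoeff_det_X_one_add_C A)
  let ev : Polynomial R →+* R := Polynomial.evalRingHom 0
  have hev : ev.mapMatrix A' = A := by ext; simp [A', ev]
  have hcomp : ev ∘ Polynomial.C = id := by ext; simp [ev]
  have h := congrArg ev (det_fromBlocks_unit_of_isRegular hA' (B.map Polynomial.C)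
    (C.map Polynomial.C) (D.map Polynomial.C))
  rw [RingHom.map_det, RingHom.map_det, RingHom.mapMatrix_apply, RingHom.mapMatrix_apply,
    fromBlocks_map, Matrix.map_sub _ (map_sub ev), Matrix.map_mul, Matrix.map_mul,
    Matrix.map_smul' _ _ _ (map_mul ev), ← RingHom.mapMatrix_apply ev A',
    ← RingHom.mapMatrix_apply ev A'.adjugate, RingHom.map_adjugate, RingHom.map_det, hev] at h
  simpa only [Matrix.map_map, hcomp, Matrix.map_id] using h

lemma det_smul_eq_of_rank_fromBlocks_le {K : Type*} [Field K] [Fintype κ] {A : Matrix m m K}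
    {B : Matrix m κ K} {C : Matrix ι m K} {D : Matrix ι κ K}
    (h : (fromBlocks A B C D).rank ≤ Fintype.card m) : A.det • D = C * A.adjugate * B := by
  ext i j
  have hminor : (fromBlocks A (B.submatrix id fun _ : Unit => j)
      (C.submatrix (fun _ : Unit => i) id) (D.submatrix (fun _ => i) fun _ => j)).det = 0 := by
    by_contra hdet
    have hrank := (fromBlocks A B C D).rank_submatrix_le
      (Sum.map id fun _ : Unit => i) (Sum.map id fun _ : Unit => j)
    have hsub : (fromBlocks A B C D).submatrix (Sum.map id fun _ : Unit => i)
        (Sum.map id fun _ : Unit => j) = fromBlocks A (B.submatrix id fun _ : Unit => j)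
          (C.submatrix (fun _ : Unit => i) id) (D.submatrix (fun _ => i) fun _ => j) := by
      ext (_ | _) (_ | _) <;> rfl
    rw [hsub, rank_of_det_ne_zero hdet, Fintype.card_sum, Fintype.card_unit] at hrank
    lia
  rw [det_fromBlocks_unit, det_unique] at hminor
  exact sub_eq_zero.mp hminor

variable [Fintype κ]

lemma toBlocks₂₂_eq_zero_of_rank_le (hM : ∀ v, (M v).rank ≤ Fintype.card m)
    (hv₀ : M v₀ = fromBlocks D₀ 0 0 0) (hD₀ : D₀.det ≠ 0) (v : V) : (M v).toBlocks₂₂ = 0 := by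
  have hminors : (fun t : 𝕜 => (D₀ + t • (M v).toBlocks₁₁).det • (M v).toBlocks₂₂) = fun t =>
      t • ((M v).toBlocks₂₁ * (D₀ + t • (M v).toBlocks₁₁).adjugate * (M v).toBlocks₁₂) := by
    refine Continuous.ext_on (dense_compl_singleton 0) (by fun_prop) (by fun_prop) fun t ht => ?_
    have h := det_smul_eq_of_rank_fromBlocks_le
      (apply_add_smul_eq_fromBlocks hv₀ v t ▸ hM (v₀ + t • v))
    rw [smul_comm, Matrix.smul_mul, Matrix.smul_mul, Matrix.mul_smul] at h
    exact smul_right_injective _ ht h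
  have h₀ := congrFun hminors 0
  simpa [hD₀] using h₀

lemma toBlocks₂₁_mul_adjugate_toBlocks₁₁_mul_toBlocks₁₂ (hM : ∀ v, (M v).rank ≤ Fintype.card m)
    (hv₀ : M v₀ = fromBlocks D₀ 0 0 0) (hD₀ : D₀.det ≠ 0) (v : V) :
    (M v).toBlocks₂₁ * (M v).toBlocks₁₁.adjugate * (M v).toBlocks₁₂ = 0 := by
  rw [← det_smul_eq_of_rank_fromBlocks_le (D := (M v).toBlocks₂₂)
    (by rw [fromBlocks_toBlocks]; exact hM v), toBlocks₂₂_eq_zero_of_rank_le hM hv₀ hD₀, smul_zero]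

lemma toBlocks₂₁_mul_adjugate_base_mul_toBlocks₁₂ (hM : ∀ v, (M v).rank ≤ Fintype.card m)
    (hv₀ : M v₀ = fromBlocks D₀ 0 0 0) (hD₀ : D₀.det ≠ 0) (v : V) :
    (M v).toBlocks₂₁ * D₀.adjugate * (M v).toBlocks₁₂ = 0 := by
  have hadj : (fun t : 𝕜 => (M v).toBlocks₂₁ * (D₀ + t • (M v).toBlocks₁₁).adjugate *
      (M v).toBlocks₁₂) = fun _ => 0 := by
    refine Continuous.ext_on (dense_compl_singleton 0) (by fun_prop) (by fun_prop) fun t ht => ?_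
    have h := toBlocks₂₁_mul_adjugate_toBlocks₁₁_mul_toBlocks₁₂ hM hv₀ hD₀ (v₀ + t • v)
    rw [apply_add_smul_eq_fromBlocks hv₀, toBlocks_fromBlocks₂₁, toBlocks_fromBlocks₁₁,
      toBlocks_fromBlocks₁₂, Matrix.mul_smul, Matrix.smul_mul, Matrix.smul_mul] at h
    exact (smul_eq_zero_iff_right ht).mp ((smul_eq_zero_iff_right ht).mp h)
  simpa using congrFun hadj 0

end BorderedDeterminant

section OrthogonalNormalForm

variable {n m : Type*} [Fintype n] [DecidableEq n] [Fintype m] [DecidableEq m]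

lemma exists_conj_eq_fromBlocks_of_rank_eq {A : Matrix n n ℝ} (hA : A.IsHermitian)
    (hrank : A.rank = Fintype.card m) :
    ∃ (k : ℕ) (O : Matrix (m ⊕ Fin k) n ℝ) (d : m → ℝ),
      Oᵀ * O = 1 ∧ (∀ i, d i ≠ 0) ∧ O * A * Oᵀ = fromBlocks (diagonal d) 0 0 0 := by
  let e₁ : m ≃ {i // hA.eigenvalues i ≠ 0} :=
    Fintype.equivOfCardEq (hrank.symm.trans hA.rank_eq_card_non_zero_eigs)
  let e₂ := (Fintype.equivFin {i // ¬ hA.eigenvalues i ≠ 0}).symm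
  let e := (e₁.sumCongr e₂).trans (Equiv.sumCompl _)
  let U : Matrix n n ℝ := hA.eigenvectorUnitary
  have hU : U * star U = 1 := Unitary.coe_mul_star_self _
  have hUA : star U * A * U = diagonal hA.eigenvalues := by
    simpa [Unitary.conjStarAlgAut_star_apply] using hA.conjStarAlgAut_star_eigenvectorUnitary
  refine ⟨_, (star U).submatrix e id, fun i => hA.eigenvalues (e₁ i), ?_,
    fun i => (e₁ i).2, ?_⟩
  · rw [transpose_submatrix, submatrix_mul_equiv]
    exact hU
  · have hconj : (star U).submatrix e id * A * ((star U).submatrix e id)ᵀ =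
        (star U * A * U).submatrix e e := rfl
    have hdiag : hA.eigenvalues ∘ e = Sum.elim (fun i => hA.eigenvalues (e₁ i)) 0 := by
      ext (i | i)
      · rfl
      · exact not_not.mp (e₂ i).2
    rw [hconj, hUA, submatrix_diagonal_equiv, hdiag, ← fromBlocks_diagonal, diagonal_zero']

lemma exists_linearMap_apply_eq_fromBlocks {V : Type*} [AddCommGroup V] [Module ℝ V]
    {N : V →ₗ[ℝ] Matrix n n ℝ} (hN : ∀ v, (N v).IsHermitian) {v₀ : V}
    (hrank : (N v₀).rank = Fintype.card m) :
    ∃ (k : ℕ) (M : V →ₗ[ℝ] Matrix (m ⊕ Fin k) (m ⊕ Fin k) ℝ) (d : m → ℝ),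
      (∀ i, d i ≠ 0) ∧ M v₀ = fromBlocks (diagonal d) 0 0 0 ∧ (∀ v, (M v).IsSymm) ∧
        (∀ v, (M v).rank ≤ (N v).rank) ∧ ∀ v, det (1 + M v) = det (1 + N v) := by
  obtain ⟨k, O, d, hO, hd, hOA⟩ := exists_conj_eq_fromBlocks_of_rank_eq (m := m) (hN v₀) hrank
  refine ⟨k, mulRightLinearMap _ ℝ Oᵀ ∘ₗ mulLeftLinearMap _ ℝ O ∘ₗ N, d, hd, hOA, fun v => ?_,
    fun v => ?_, fun v => ?_⟩
  · have hNv : (N v)ᵀ = N v := hN v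
    change (O * N v * Oᵀ)ᵀ = O * N v * Oᵀ
    rw [transpose_mul, transpose_mul, transpose_transpose, hNv, Matrix.mul_assoc]
  · exact (rank_mul_le_left _ _).trans (rank_mul_le_right _ _)
  · change det (1 + O * N v * Oᵀ) = det (1 + N v)
    rw [Matrix.mul_assoc, det_one_add_mul_comm, Matrix.mul_assoc, hO, Matrix.mul_one]

end OrthogonalNormalForm

section Isotropic

variable {K E m κ : Type*} [Field K] [Fintype m] [DecidableEq m] {G : Matrix m m K}

lemma two_mul_rank_le_card_of_transpose_mul_mul_eq_zero [Fintype κ] (hG : G.det ≠ 0)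
    {B : Matrix m κ K} (hB : Bᵀ * G * B = 0) : 2 * B.rank ≤ Fintype.card m := by
  have h := rank_add_rank_le_card_of_mul_eq_zero (Matrix.mul_assoc Bᵀ G B ▸ hB)
  rwa [rank_transpose, rank_mul_eq_right_of_det_ne_zero G B hG, ← two_mul] at h

lemma exists_smul_eq_of_isotropic (hm : Fintype.card m < 4) (hG : G.det ≠ 0) (hsymm : G.IsSymm)
    {x y : m → K} (hx : x ≠ 0) (hxx : x ⬝ᵥ G *ᵥ x = 0) (hxy : x ⬝ᵥ G *ᵥ y = 0)
    (hyy : y ⬝ᵥ G *ᵥ y = 0) : ∃ c : K, c • x = y := by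
  have hyx : y ⬝ᵥ G *ᵥ x = 0 := by
    rw [dotProduct_mulVec, ← mulVec_transpose, hsymm.eq, dotProduct_comm, hxy]
  let B : Matrix m (Fin 2) K := (of ![x, y])ᵀ
  have hB : Bᵀ * G * B = 0 := by
    ext i j
    rw [Matrix.mul_assoc]
    change ![x, y] i ⬝ᵥ G *ᵥ ![x, y] j = 0
    fin_cases i <;> fin_cases j <;> assumption
  have hrank := two_mul_rank_le_card_of_transpose_mul_mul_eq_zero hG hB
  by_contra! h
  have hli : LinearIndependent K (of ![x, y]).row := (LinearIndependent.pair_iff' hx).mpr h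
  have := hli.rank_matrix
  rw [rank_transpose, this, Fintype.card_fin] at hrank
  lia

/-- By polarization a column `x` of `b u` is `G`-orthogonal to the corresponding column of every
`b v`, and then to all the other ones. -/
lemma exists_eq_vecMulVec_of_transpose_mul_mul_eq_zero [NeZero (2 : K)] [AddCommGroup E]
    [Module K E] (hm : Fintype.card m < 4) (hG : G.det ≠ 0) (hsymm : G.IsSymm)
    {b : E →ₗ[K] Matrix m κ K} (hb₀ : b ≠ 0) (hb : ∀ v, (b v)ᵀ * G * b v = 0) :
    ∃ x ≠ 0, ∃ c : E →ₗ[K] κ → K, ∀ v, b v = vecMulVec x (c v) := by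
  have hiso (v : E) (j k : κ) : (b v).col j ⬝ᵥ G *ᵥ (b v).col k = 0 := by
    have h := congrFun₂ (hb v) j k
    rwa [Matrix.mul_assoc] at h
  have hpolar (u v : E) (j k : κ) : (b u).col j ⬝ᵥ G *ᵥ (b v).col k +
      (b v).col j ⬝ᵥ G *ᵥ (b u).col k = 0 := by
    have hadd (j : κ) : (b (u + v)).col j = (b u).col j + (b v).col j := by rw [map_add]; rfl
    have h := hiso (u + v) j k
    simp only [hadd, mulVec_add, dotProduct_add, add_dotProduct, hiso] at h
    linear_combination h
  obtain ⟨u, j, hx⟩ : ∃ u j, (b u).col j ≠ 0 := by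
    by_contra! h
    exact hb₀ (LinearMap.ext fun v => Matrix.ext fun i j => congrFun (h v j) i)
  have hspan {v : E} {k : κ} (h : (b u).col j ⬝ᵥ G *ᵥ (b v).col k = 0) :
      ∃ t : K, t • (b u).col j = (b v).col k :=
    exists_smul_eq_of_isotropic hm hG hsymm hx (hiso u j j) h (hiso v k k)
  have hcol (v : E) (k : κ) : ∃ t : K, t • (b u).col j = (b v).col k := by
    have hcomm : (b u).col j ⬝ᵥ G *ᵥ (b v).col j = (b v).col j ⬝ᵥ G *ᵥ (b u).col j := by
      rw [dotProduct_mulVec, ← mulVec_transpose, hsymm.eq, dotProduct_comm]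
    obtain ⟨s, hs⟩ := hspan (v := v) (k := j) <| by
      have h := hpolar u v j j
      rwa [← hcomm, ← two_mul, mul_eq_zero_iff_left two_ne_zero] at h
    refine hspan ?_
    have h := hpolar u v j k
    rwa [← hs, smul_dotProduct, hiso, smul_zero, add_zero] at h
  obtain ⟨i, hi⟩ := Function.ne_iff.mp hx
  refine ⟨(b u).col j, hx, ((b u).col j i)⁻¹ • LinearMap.proj i ∘ₗ b, fun v => ?_⟩
  ext l k
  obtain ⟨t, ht⟩ := hcol v k
  have hentry (l : m) : b v l k = t * (b u).col j l := (congrFun ht l).symm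
  change b v l k = (b u).col j l * (((b u).col j i)⁻¹ * b v i k)
  rw [Pi.zero_apply] at hi
  rw [hentry, hentry]
  field_simp

end Isotropic

section RankOneFamily

variable {K E ι : Type*} [Field K] [AddCommGroup E] [Module K E]

lemma exists_eq_smul_vecMulVec_self {A : E →ₗ[K] Matrix ι ι K}
    (hminor : ∀ v i k l, A v i i * A v k l = A v i k * A v i l) :
    ∃ (q : Module.Dual K E) (y : ι → K), ∀ v, A v = q v • vecMulVec y y := by
  by_cases hdiag : ∃ u i, A u i i ≠ 0
  · obtain ⟨u, i, hi⟩ := hdiag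
    refine ⟨(A u i i ^ 2)⁻¹ • entryLinearMap K K i i ∘ₗ A, A u i, fun v => ?_⟩
    have hpolar (k l : ι) : A u i i * A v k l + A v i i * A u k l =
        A u i k * A v i l + A v i k * A u i l := by
      have h := hminor (u + v) i k l
      simp only [map_add, Matrix.add_apply] at h
      linear_combination h - hminor u i k l - hminor v i k l
    have hrow (k : ι) : A u i i * A v i k = A v i i * A u i k := by
      refine sub_eq_zero.mp (pow_eq_zero_iff two_ne_zero |>.mp ?_)
      linear_combination A u i i * A v i i * hpolar k k - A u i i ^ 2 * hminor v i k k -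
        A v i i ^ 2 * hminor u i k k
    ext k l
    change A v k l = (A u i i ^ 2)⁻¹ * A v i i * (A u i k * A u i l)
    field_simp
    linear_combination A u i i * hpolar k l + A u i k * hrow l + A u i l * hrow k -
      A v i i * hminor u i k l
  · push Not at hdiag
    refine ⟨0, 0, fun v => ?_⟩
    ext i j
    have h := hminor v i j j
    rw [hdiag, zero_mul, eq_comm, mul_self_eq_zero] at h
    simpa using h

lemma mul_apply_eq_of_adjugate_eq_zero {R : Type*} [CommRing R] {A : Matrix (Fin 3) (Fin 3) R}
    (hsymm : A.IsSymm) (hadj : A.adjugate = 0) (i k l : Fin 3) :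
    A i i * A k l = A i k * A i l := by
  have hcofactor (i j : Fin 3) := congrFun₂ hadj i j
  simp only [adjugate_fin_three, of_apply, cons_val', cons_val_fin_one, Matrix.zero_apply]
    at hcofactor
  have h₀₁ := hsymm.apply 0 1
  have h₀₂ := hsymm.apply 0 2
  have h₁₂ := hsymm.apply 1 2
  simp only [Fin.forall_fin_succ, Fin.succ_zero_eq_one, Fin.succ_one_eq_two, cons_val_zero,
    cons_val_one, cons_val, h₀₁, h₀₂, h₁₂] at hcofactor
  fin_cases i <;> fin_cases k <;> fin_cases l <;>
    simp only [Fin.zero_eta, Fin.mk_one, Fin.reduceFinMk, h₀₁, h₀₂, h₁₂] <;> grind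

lemma adjugate_one_sub_vecMulVec {R : Type*} [CommRing R] (x y : Fin 3 → R) :
    (1 - vecMulVec x y).adjugate = (1 - y ⬝ᵥ x) • 1 + vecMulVec x y := by
  ext i j
  fin_cases i <;> fin_cases j <;>
    simp [adjugate_fin_three, vecMulVec_apply, dotProduct, Fin.sum_univ_three] <;> ring

end RankOneFamily

section PlaneFamily

lemma one_sub_smul_vecMulVec_mul_mul_self {R n : Type*} [CommRing R] [Fintype n] [DecidableEq n]
    {N : Matrix n n R} (hN : N.IsSymm) (x : n → R) (s : R) :
    (1 - s • vecMulVec x x) * N * (1 - s • vecMulVec x x) =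
      N - s • (vecMulVec x (N *ᵥ x) + vecMulVec (N *ᵥ x) x) +
        (s ^ 2 * x ⬝ᵥ N *ᵥ x) • vecMulVec x x := by
  have hrow : x ᵥ* N = N *ᵥ x := by rw [← mulVec_transpose, hN.eq]
  simp only [sub_mul, mul_sub, one_mul, mul_one, Matrix.smul_mul, Matrix.mul_smul, vecMulVec_mul,
    mul_vecMulVec, hrow, smul_mulVec, vecMulVec_mulVec, op_smul_eq_smul, dotProduct_comm (N *ᵥ x)]
  ext i j
  simp only [Matrix.add_apply, Matrix.sub_apply, Matrix.smul_apply, vecMulVec_apply, smul_eq_mul,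
    Pi.smul_apply]
  ring

variable {K E : Type*} [Field K] [AddCommGroup E] [Module K E]
  {a : E →ₗ[K] Matrix (Fin 3) (Fin 3) K} {x : Fin 3 → K}

lemma exists_compression_eq_smul_vecMulVec_self (ha : ∀ v, (a v).IsSymm) {s : K}
    (hs : s * x ⬝ᵥ x = 1) (hadj : ∀ v, x ⬝ᵥ (a v).adjugate *ᵥ x = 0) :
    ∃ (q : Module.Dual K E) (y : Fin 3 → K), x ⬝ᵥ y = 0 ∧ ∀ v,
      (1 - s • vecMulVec x x) * a v * (1 - s • vecMulVec x x) = q v • vecMulVec y y := by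
  set P : Matrix (Fin 3) (Fin 3) K := 1 - s • vecMulVec x x with hP
  have hPT : Pᵀ = P := by simp [P]
  have hxP : x ᵥ* P = 0 := by
    rw [hP, vecMul_sub, vecMul_one, vecMul_smul, vecMul_vecMulVec, smul_smul, hs, one_smul,
      sub_self]
  have hPadj : P.adjugate = s • vecMulVec x x := by
    rw [hP, ← smul_vecMulVec, adjugate_one_sub_vecMulVec, dotProduct_smul, smul_eq_mul, hs,
      sub_self, zero_smul, zero_add]
  have hidem : P * P = P := by
    nth_rw 1 [hP]
    rw [sub_mul, one_mul, Matrix.smul_mul, vecMulVec_mul, hxP, vecMulVec_zero, smul_zero, sub_zero]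
  let A := mulRightLinearMap (Fin 3) K P ∘ₗ mulLeftLinearMap (Fin 3) K P ∘ₗ a
  have hA (v : E) : A v = P * a v * P := rfl
  have hAsymm (v : E) : (A v).IsSymm := by
    rw [hA, IsSymm, transpose_mul, transpose_mul, hPT, (ha v).eq, Matrix.mul_assoc]
  have hAadj (v : E) : (A v).adjugate = 0 := by
    have hsandwich : vecMulVec x x * (a v).adjugate * vecMulVec x x = 0 := by
      rw [Matrix.mul_assoc, mul_vecMulVec, vecMulVec_mul_vecMulVec, hadj, zero_smul, vecMulVec_zero]
    rw [hA, adjugate_mul_distrib, adjugate_mul_distrib, hPadj, ← Matrix.mul_assoc]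
    simp only [Matrix.smul_mul, Matrix.mul_smul, hsandwich, smul_zero]
  obtain ⟨q, z, hz⟩ := exists_eq_smul_vecMulVec_self fun v =>
    mul_apply_eq_of_adjugate_eq_zero (hAsymm v) (hAadj v)
  refine ⟨q, P *ᵥ z, by rw [dotProduct_mulVec, hxP, zero_dotProduct], fun v => ?_⟩
  have hPA : A v = P * A v * P := by
    simp only [hA, ← Matrix.mul_assoc, hidem]
    rw [Matrix.mul_assoc _ P P, hidem]
  rw [← hA, hPA, hz, Matrix.mul_smul, Matrix.smul_mul, mul_vecMulVec, vecMulVec_mul,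
    ← mulVec_transpose, hPT]

lemma exists_eq_vecMulVec_add_vecMulVec_add_smul [NeZero (2 : K)]
    (ha : ∀ v, (a v).IsSymm) (hx : x ⬝ᵥ x ≠ 0)
    (hadj : ∀ v, x ⬝ᵥ (a v).adjugate *ᵥ x = 0) :
    ∃ (ζ : E →ₗ[K] Fin 3 → K) (q : Module.Dual K E) (y : Fin 3 → K), x ⬝ᵥ y = 0 ∧
      ∀ v, a v = vecMulVec x (ζ v) + vecMulVec (ζ v) x + q v • vecMulVec y y := by
  obtain ⟨s, hs⟩ : ∃ s, s * x ⬝ᵥ x = 1 := ⟨_, inv_mul_cancel₀ hx⟩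
  obtain ⟨q, y, hxy, hq⟩ := exists_compression_eq_smul_vecMulVec_self ha hs hadj
  let g : E →ₗ[K] Fin 3 → K := (mulVecBilin K K).flip x ∘ₗ a
  have hg (v : E) : g v = a v *ᵥ x := rfl
  refine ⟨s • g - (s ^ 2 / 2) • (dotProductBilin K K x ∘ₗ g).smulRight x, q, y, hxy, fun v => ?_⟩
  have h2 : (2 : K) ≠ 0 := two_ne_zero
  rw [← hq, one_sub_smul_vecMulVec_mul_mul_self (ha v), ← hg]
  ext i j
  simp only [Matrix.add_apply, Matrix.sub_apply, Matrix.smul_apply, vecMulVec_apply, smul_eq_mul,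
    LinearMap.sub_apply, LinearMap.smul_apply, LinearMap.smulRight_apply, LinearMap.comp_apply,
    dotProductBilin_apply_apply, Pi.sub_apply, Pi.smul_apply]
  field_simp
  ring

end PlaneFamily

section Classification

lemma dotProduct_adjugate_mulVec_eq_zero {𝕜 V m κ : Type*} [NontriviallyNormedField 𝕜]
    [AddCommGroup V] [Module 𝕜 V] [Fintype m] [DecidableEq m] {a : V →ₗ[𝕜] Matrix m m 𝕜}
    {c : V →ₗ[𝕜] κ → 𝕜} {x : m → 𝕜} (hc : c ≠ 0)
    (h : ∀ v, vecMulVec (c v) x * (a v).adjugate * vecMulVec x (c v) = 0) (v : V) :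
    x ⬝ᵥ (a v).adjugate *ᵥ x = 0 := by
  have hne {w : V} (hw : c w ≠ 0) : x ⬝ᵥ (a w).adjugate *ᵥ x = 0 := by
    have hprod := h w
    rw [vecMulVec_mul, vecMulVec_mul_vecMulVec, ← dotProduct_mulVec, vecMulVec_smul] at hprod
    exact (smul_eq_zero_iff_left (vecMulVec_ne_zero hw hw)).mp hprod
  by_cases hv : c v = 0
  · obtain ⟨u, hu⟩ : ∃ u, c u ≠ 0 := by
      by_contra! h₀
      exact hc (LinearMap.ext h₀)
    have hline : (fun t : 𝕜 => x ⬝ᵥ (a v + t • a u).adjugate *ᵥ x) = fun _ => 0 := by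
      refine Continuous.ext_on (dense_compl_singleton 0) (by fun_prop) (by fun_prop) fun t ht => ?_
      have hcu : c (v + t • u) ≠ 0 := by
        rw [map_add, map_smul, hv, zero_add]
        exact smul_ne_zero ht hu
      simpa only [map_add, map_smul] using hne hcu
    simpa using congrFun hline 0
  · exact hne hv

lemma exists_eq_fromBlocks_of_isSymm_of_rank_le {𝕜 V m κ : Type*} [NontriviallyNormedField 𝕜]
    [AddCommGroup V] [Module 𝕜 V] [Fintype m] [DecidableEq m] [Fintype κ]
    {M : V →ₗ[𝕜] Matrix (m ⊕ κ) (m ⊕ κ) 𝕜} (hsymm : ∀ v, (M v).IsSymm)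
    (hrank : ∀ v, (M v).rank ≤ Fintype.card m) {v₀ : V} {D₀ : Matrix m m 𝕜}
    (hv₀ : M v₀ = fromBlocks D₀ 0 0 0) (hD₀ : D₀.det ≠ 0) :
    ∃ (a : V →ₗ[𝕜] Matrix m m 𝕜) (b : V →ₗ[𝕜] Matrix m κ 𝕜), (∀ v, (a v).IsSymm) ∧
      (∀ v, M v = fromBlocks (a v) (b v) (b v)ᵀ 0) ∧
      (∀ v, (b v)ᵀ * (a v).adjugate * b v = 0) ∧ ∀ v, (b v)ᵀ * D₀.adjugate * b v = 0 := by
  let a : V →ₗ[𝕜] Matrix m m 𝕜 :=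
    { toFun v := (M v).toBlocks₁₁
      map_add' u v := by rw [map_add]; rfl
      map_smul' t v := by rw [map_smul]; rfl }
  let b : V →ₗ[𝕜] Matrix m κ 𝕜 :=
    { toFun v := (M v).toBlocks₁₂
      map_add' u v := by rw [map_add]; rfl
      map_smul' t v := by rw [map_smul]; rfl }
  have hbT v : (M v).toBlocks₂₁ = (b v)ᵀ := by
    ext i j
    exact (hsymm v).apply _ _
  refine ⟨a, b, fun v => (hsymm v).submatrix _, fun v => ?_, fun v => ?_, fun v => ?_⟩
  · rw [← hbT, ← toBlocks₂₂_eq_zero_of_rank_le hrank hv₀ hD₀ v]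
    exact (fromBlocks_toBlocks _).symm
  · rw [← hbT]
    exact toBlocks₂₁_mul_adjugate_toBlocks₁₁_mul_toBlocks₁₂ hrank hv₀ hD₀ v
  · rw [← hbT]
    exact toBlocks₂₁_mul_adjugate_base_mul_toBlocks₁₂ hrank hv₀ hD₀ v

theorem eq_fromBlocks_or_eq_vecMulVec_add_vecMulVec_add_smul {E κ : Type*} [AddCommGroup E]
    [Module ℝ E] [Fintype κ] {M : E →ₗ[ℝ] Matrix (Fin 3 ⊕ κ) (Fin 3 ⊕ κ) ℝ}
    (hsymm : ∀ v, (M v).IsSymm) (hrank : ∀ v, (M v).rank ≤ 3) {v₀ : E}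
    {D₀ : Matrix (Fin 3) (Fin 3) ℝ} (hv₀ : M v₀ = fromBlocks D₀ 0 0 0) (hD₀ : D₀.det ≠ 0) :
    (∃ a : E →ₗ[ℝ] Matrix (Fin 3) (Fin 3) ℝ,
      (∀ v, (a v).IsSymm) ∧ ∀ v, M v = fromBlocks (a v) 0 0 0) ∨
    ∃ (x y : Fin 3 ⊕ κ → ℝ) (ξ : E →ₗ[ℝ] Fin 3 ⊕ κ → ℝ) (q : Module.Dual ℝ E), x ⬝ᵥ y = 0 ∧
      ∀ v, M v = vecMulVec x (ξ v) + vecMulVec (ξ v) x + q v • vecMulVec y y := by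
  obtain ⟨a, b, ha, hM, hadj, hadj₀⟩ := exists_eq_fromBlocks_of_isSymm_of_rank_le hsymm
    (by simpa using hrank) hv₀ hD₀
  by_cases hb : b = 0
  · exact Or.inl ⟨a, ha, fun v => by simpa [hb] using hM v⟩
  have hD₀symm : D₀.IsSymm := (isSymm_fromBlocks_iff.mp (hv₀ ▸ hsymm v₀)).1
  obtain ⟨x, hx, c, hbc⟩ := exists_eq_vecMulVec_of_transpose_mul_mul_eq_zero (by simp)
    (by simpa [det_adjugate] using hD₀) hD₀symm.adjugate hb hadj₀
  have hc : c ≠ 0 := by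
    rintro rfl
    exact hb (LinearMap.ext fun v => by ext; simp [hbc, vecMulVec_apply])
  simp only [hbc, transpose_vecMulVec] at hadj
  obtain ⟨ζ, q, y, hxy, hay⟩ := exists_eq_vecMulVec_add_vecMulVec_add_smul ha
    (dotProduct_self_eq_zero.not.mpr hx) (dotProduct_adjugate_mulVec_eq_zero hc hadj)
  let ξ : E →ₗ[ℝ] Fin 3 ⊕ κ → ℝ :=
    (LinearEquiv.sumArrowLequivProdArrow (Fin 3) κ ℝ ℝ).symm.toLinearMap ∘ₗ ζ.prod c
  refine Or.inr ⟨Sum.elim x 0, Sum.elim y 0, ξ, q, by simp [hxy], fun v => ?_⟩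
  rw [hM, hay, hbc]
  ext (i | i) (j | j) <;> simp [ξ, vecMulVec_apply]

end Classification

theorem exists_isSingularPoint_of_rank_eq_three {F : MvPolynomial (Fin 4) ℝ}
    (hF : F.IsHomogeneous 3) {n : Type*} [Fintype n] [DecidableEq n]
    {N : (Fin 3 → ℝ) →ₗ[ℝ] Matrix n n ℝ} (hN : ∀ v, (N v).IsHermitian)
    (hrank : ∀ v, (N v).rank ≤ 3) {v₀ : Fin 3 → ℝ} (hv₀ : (N v₀).rank = 3)
    (hFN : ∀ v, eval (vecCons 1 v) F = det (1 + N v)) :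
    ∃ p : Fin 4 → ℂ, p ≠ 0 ∧ IsSingularPoint F p := by
  obtain ⟨k, M, d, hd, hM₀, hsymm, hle, hdet⟩ :=
    exists_linearMap_apply_eq_fromBlocks (m := Fin 3) hN (by simpa using hv₀)
  simp only [← hdet] at hFN
  obtain ⟨a, ha, hM⟩ | ⟨x, y, ξ, q, hxy, hM⟩ :=
    eq_fromBlocks_or_eq_vecMulVec_add_vecMulVec_add_smul hsymm
      (fun v => (hle v).trans (hrank v)) hM₀ (by simpa [Finset.prod_ne_zero_iff] using hd)
  · refine exists_isSingularPoint_of_eval_eq_det_fin_three hF a ha fun v => ?_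
    rw [hFN, hM, ← fromBlocks_one, fromBlocks_add]
    simp
  · exact exists_isSingularPoint_of_eval_eq_det_rank_three hF hxy ξ q fun v => by rw [hFN, hM]

/-- if `det(I + Ax + By + Cz)` is a cubic with `A, B, C` real
symmetric, then the projective surface defined by its homogenization is singular. -/
theorem stmt_14 (r : ℕ) (A B C' : Matrix (Fin r) (Fin r) ℝ)
    (hA : A.IsSymm) (hB : B.IsSymm) (hC : C'.IsSymm)
    (f : MvPolynomial (Fin 3) ℝ)
    (hf : f = ((1 : Matrix (Fin r) (Fin r) (MvPolynomial (Fin 3) ℝ))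
        + (X 0 : MvPolynomial (Fin 3) ℝ) • A.map C + (X 1 : MvPolynomial (Fin 3) ℝ) • B.map C + (X 2 : MvPolynomial (Fin 3) ℝ) • C'.map C).det)
    (hdeg : f.totalDegree = 3)
    (F : MvPolynomial (Fin 4) ℝ) (hFhom : F.IsHomogeneous 3)
    (hFdehom : ∀ x y z : ℝ, eval ![(1 : ℝ), x, y, z] F = eval ![x, y, z] f) :
    ∃ p : Fin 4 → ℂ, p ≠ 0 ∧ aeval p F = 0 ∧ ∀ i, aeval p (pderiv i F) = 0 := by
  let N : (Fin 3 → ℝ) →ₗ[ℝ] Matrix (Fin r) (Fin r) ℝ :=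
    Fintype.linearCombination ℝ ![A, B, C']
  have hNv (v : Fin 3 → ℝ) : N v = v 0 • A + v 1 • B + v 2 • C' := by
    simp [N, Fintype.linearCombination_apply, Fin.sum_univ_three]
  have hN (v : Fin 3 → ℝ) : (N v).IsHermitian := by
    rw [IsHermitian, conjTranspose_eq_transpose_of_trivial, hNv]
    simp [hA.eq, hB.eq, hC.eq]
  have hfN (v : Fin 3 → ℝ) : eval v f = det (1 + N v) := by
    rw [hf, RingHom.map_det]
    congr 1
    ext i j
    simp [hNv, one_apply, apply_ite (eval v), add_assoc]
  have hrank (v : Fin 3 → ℝ) := natDegree_restrictToLine_eq_rank hN hfN v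
  obtain ⟨v₀, hv₀⟩ := exists_natDegree_restrictToLine_eq f
  refine exists_isSingularPoint_of_rank_eq_three hFhom hN
    (fun v => (hrank v).symm.trans_le ((natDegree_restrictToLine_le f v).trans_eq hdeg))
    ((hrank v₀).symm.trans (hv₀.trans hdeg)) fun v => ?_
  have hv : v = ![v 0, v 1, v 2] := (FinVec.etaExpand_eq v).symm
  rw [← hfN, hv]
  exact hFdehom _ _ _
end
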